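/- arXiv:1708.00780 — 3 statements merged into one kernel-verified Lean document; each statement's English description precedes it below -/
import Mathlib

section
/- Let K = F((t)), O = F[[t]], and let L_1,...,L_n be full-rank O-lattices in K^n. Then there exists a full-rank lattice L such that val(det(L)) + ∑_{i=1}^n c(L,L_i) = A(L_1,...,L_n), where A(L_1,...,L_n) = min { val(det(v_1,...,v_n)) : v_i ∈ L_i } and c(L,L_i) = min over generators w of L of min{λ ∈ ℤ : t^λ w ∈ L_i}. -/
noncomputable section
open scoped Classical

variable {F : Type*} [Field F] {n : ℕ}

/-- `v` is a basis (over `F[[t]]`) of the full-rank lattice `L` in `K^n`, `K = F((t))`. -/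
def IsLatticeBasis (L : Submodule (PowerSeries F) (Fin n → LaurentSeries F))
    (v : Fin n → Fin n → LaurentSeries F) : Prop :=
  LinearIndependent (LaurentSeries F) v ∧ L = Submodule.span (PowerSeries F) (Set.range v)

/-- `L` is a full-rank `F[[t]]`-lattice in `K^n`. -/
def IsFullLattice (L : Submodule (PowerSeries F) (Fin n → LaurentSeries F)) : Prop :=
  ∃ v, IsLatticeBasis L v

/-- `t^λ` as an element of `K = F((t))`. -/
def tpow (lam : ℤ) : LaurentSeries F := HahnSeries.single lam 1

/-- `val (det L) = d` : the valuation of the determinant of an `O`-basis of `L` is `d`. -/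
def HasValDet (L : Submodule (PowerSeries F) (Fin n → LaurentSeries F)) (d : ℤ) : Prop :=
  ∃ v, IsLatticeBasis L v ∧ (Matrix.of v).det.order = d

/-- `w` is a generator of `L`: it belongs to some `O`-basis of `L`. -/
def IsGen (L : Submodule (PowerSeries F) (Fin n → LaurentSeries F))
    (w : Fin n → LaurentSeries F) : Prop :=
  ∃ v i, IsLatticeBasis L v ∧ v i = w

/-- `c(w, M) = lam`, i.e. `lam = min {μ : t^μ • w ∈ M}`. -/
def CVec (w : Fin n → LaurentSeries F) (M : Submodule (PowerSeries F) (Fin n → LaurentSeries F))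
    (lam : ℤ) : Prop :=
  IsLeast {μ : ℤ | (tpow μ : LaurentSeries F) • w ∈ M} lam

/-- `c(L, M) = c`, i.e. `c` is the minimum of `c(w,M)` over generators `w` of `L`. -/
def CLat (L M : Submodule (PowerSeries F) (Fin n → LaurentSeries F)) (c : ℤ) : Prop :=
  IsLeast {μ : ℤ | ∃ w, IsGen L w ∧ CVec w M μ} c

/-- `A(L_1, ..., L_n) = a` : the minimum of `val (det (v_1, ..., v_n))` over `v_i ∈ L_i`. -/
def AIs (Ls : Fin n → Submodule (PowerSeries F) (Fin n → LaurentSeries F)) (a : ℤ) : Prop :=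
  IsLeast {d : ℤ | ∃ v : Fin n → Fin n → LaurentSeries F,
    (∀ i, v i ∈ Ls i) ∧ (Matrix.of v).det ≠ 0 ∧ (Matrix.of v).det.order = d} a

/-- `x` lies in `t • L`. -/
def MemTL (L : Submodule (PowerSeries F) (Fin n → LaurentSeries F))
    (x : Fin n → LaurentSeries F) : Prop :=
  ∃ y ∈ L, x = (PowerSeries.X : PowerSeries F) • y

end

open Module in
theorem km_rado {F E : Type*} [Field F] [AddCommGroup E] [Module F E] [FiniteDimensional F E]
    {ι : Type*} [Fintype ι] [DecidableEq ι] (N : ℕ) : ∀ (V : ι → Submodule F E),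
    (∑ i, finrank F (V i) = N) →
    (∀ I : Finset ι, I.card ≤ finrank F (⨆ i ∈ I, V i : Submodule F E)) →
    ∃ v : ι → E, (∀ i, v i ∈ V i) ∧ LinearIndependent F v := by
  induction N using Nat.strong_induction_on with
  | _ N ih =>
  intro V hN hV
  by_cases hex : ∃ i, 2 ≤ finrank F (V i)
  · obtain ⟨i, hi⟩ := hex
    have key : ∀ H : Submodule F E, H < V i → 
        (∃ v : ι → E, (∀ i, v i ∈ V i) ∧ LinearIndependent F v) ∨
        ∃ I : Finset ι, i ∉ I ∧ finrank F (H ⊔ ⨆ j ∈ I, V j : Submodule F E) ≤ I.card := by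
      intro H hH
      by_cases hc : ∀ I : Finset ι, I.card ≤ 
        finrank F (⨆ j ∈ I, Function.update V i H j : Submodule F E)
      · left
        have hlt : ∑ j, finrank F (Function.update V i H j) < N := by
          rw [← hN]
          apply Finset.sum_lt_sum
          · intro j _
            by_cases hj : j = i
            · subst hj; rw [Function.update_self]; exact Submodule.finrank_mono hH.le
            · rw [Function.update_of_ne hj]
          · exact ⟨i, Finset.mem_univ _, by rw [Function.update_self]; exact Submodule.finrank_lt_finrank_of_lt hH⟩
        obtain ⟨v, hv, hl⟩ := ih _ hlt _ rfl hc
        refine ⟨v, fun j => ?_, hl⟩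
        by_cases hj : j = i
        · subst hj; exact hH.le (by simpa using hv j)
        · simpa [hj] using hv j
      · right
        push Not at hc
        obtain ⟨I, hI⟩ := hc
        have hiI : i ∈ I := by
          by_contra hn
          have : (⨆ j ∈ I, Function.update V i H j) = ⨆ j ∈ I, V j := by
            refine iSup_congr fun j => iSup_congr fun hj => ?_
            rw [Function.update_of_ne]; rintro rfl; exact hn hj
          rw [this] at hI
          exact absurd (hV I) (by omega)
        refine ⟨I.erase i, by simp, ?_⟩
        have : (⨆ j ∈ I, Function.update V i H j) = H ⊔ ⨆ j ∈ I.erase i, V j := by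
          conv_lhs => rw [← Finset.insert_erase hiI]
          rw [Finset.iSup_insert]
          congr 1
          · simp
          · refine iSup_congr fun j => iSup_congr fun hj => ?_
            rw [Function.update_of_ne]; exact Finset.ne_of_mem_erase hj
        rw [this] at hI
        rw [Finset.card_erase_of_mem hiI]; omega
    obtain ⟨H, H', h1, h2, h3⟩ : ∃ H H' : Submodule F E, H < V i ∧ H' < V i ∧ H ⊔ H' = V i := by
      have hne : V i ≠ ⊥ := by
        intro h; rw [h] at hi; simp at hi
      obtain ⟨x, hx, hx0⟩ := Submodule.exists_mem_ne_zero_of_ne_bot hne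
      have hle : Submodule.span F {x} ≤ V i := by simpa using hx
      obtain ⟨Q, hQ⟩ := Submodule.exists_isCompl (Submodule.span F {x})
      refine ⟨Submodule.span F {x}, Q ⊓ V i, lt_of_le_of_ne hle ?_, lt_of_le_of_ne inf_le_right ?_, ?_⟩
      · intro h; rw [← h, finrank_span_singleton hx0] at hi; omega
      · intro h
        have hxQ : x ∈ Q := (inf_eq_right.mp h) hx
        have : x ∈ Submodule.span F {x} ⊓ Q := ⟨Submodule.mem_span_singleton_self x, hxQ⟩
        rw [hQ.inf_eq_bot] at this
        exact hx0 (by simpa using this)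
      · rw [← sup_inf_assoc_of_le _ hle, hQ.sup_eq_top, top_inf_eq]
    rcases key H h1 with h | ⟨I, hiI, hI⟩
    · exact h
    rcases key H' h2 with h | ⟨J, hiJ, hJ⟩
    · exact h
    exfalso
    have hsm := Submodule.finrank_sup_add_finrank_inf_eq (H ⊔ ⨆ j ∈ I, V j) (H' ⊔ ⨆ j ∈ J, V j)
    have a1 : (insert i (I ∪ J)).card ≤ 
        finrank F ((H ⊔ ⨆ j ∈ I, V j) ⊔ (H' ⊔ ⨆ j ∈ J, V j) : Submodule F E) := by
      refine (hV _).trans (Submodule.finrank_mono ?_)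
      rw [Finset.iSup_insert, Finset.iSup_union, ← h3, sup_sup_sup_comm]
    have a2 : (I ∩ J).card ≤ 
        finrank F ((H ⊔ ⨆ j ∈ I, V j) ⊓ (H' ⊔ ⨆ j ∈ J, V j) : Submodule F E) := by
      refine (hV _).trans (Submodule.finrank_mono ?_)
      refine le_inf (le_sup_of_le_right ?_) (le_sup_of_le_right ?_)
      · exact biSup_mono fun j hj => (Finset.mem_inter.mp hj).1
      · exact biSup_mono fun j hj => (Finset.mem_inter.mp hj).2
    rw [Finset.card_insert_of_notMem (by simp [hiI, hiJ])] at a1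
    have := Finset.card_union_add_card_inter I J
    omega
  · push Not at hex
    have : ∀ i, ∃ v ∈ V i, V i ≤ Submodule.span F {v} := by
      intro i
      obtain ⟨v, hv⟩ := finrank_le_one_iff.mp (Nat.lt_succ_iff.mp (hex i))
      refine ⟨v, v.2, fun x hx => ?_⟩
      obtain ⟨c, hc⟩ := hv ⟨x, hx⟩
      exact Submodule.mem_span_singleton.mpr ⟨c, congrArg Subtype.val hc⟩
    choose v hv hs using this
    refine ⟨v, hv, ?_⟩
    rw [linearIndependent_iff_card_le_finrank_span]
    refine (hV Finset.univ).trans (Submodule.finrank_mono ?_)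
    refine iSup₂_le fun i _ => (hs i).trans (Submodule.span_mono ?_)
    simp

open Module in
theorem km_adapted {F : Type*} [Field F] {n : ℕ} (W : Submodule F (Fin n → F)) :
    ∃ (Q : Matrix (Fin n) (Fin n) F) (S : Finset (Fin n)), Q.det ≠ 0 ∧
      S.card = finrank F W ∧ ∀ x ∈ W, ∀ j ∉ S, (Q.mulVec x) j = 0 := by
  obtain ⟨U, hU⟩ := Submodule.exists_isCompl W
  let b := ((finBasis F W).prod (finBasis F U)).map (Submodule.prodEquivOfIsCompl W U hU)
  have hcard : Fintype.card (Fin (finrank F W) ⊕ Fin (finrank F U)) = Fintype.card (Fin n) := by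
    rw [← finrank_eq_card_basis b, ← finrank_eq_card_basis (Pi.basisFun F (Fin n))]
  let e := Fintype.equivOfCardEq hcard
  let φ := (b.reindex e).equivFun
  refine ⟨LinearMap.toMatrix' φ.toLinearMap, 
    Finset.univ.image (fun k => e (Sum.inl k)), ?_, ?_, ?_⟩
  · rw [LinearMap.det_toMatrix']
    exact (LinearEquiv.isUnit_det' φ).ne_zero
  · rw [Finset.card_image_of_injective]
    · simp
    · exact e.injective.comp Sum.inl_injective
  · intro x hx j hj
    rw [← Matrix.toLin'_apply, Matrix.toLin'_toMatrix']
    obtain ⟨k, rfl⟩ := e.surjective j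
    rcases k with k | k
    · simp at hj
    · simp [φ, b, Submodule.prodEquivOfIsCompl_symm_apply_left W U hU ⟨x, hx⟩]

theorem km_ge_iff {F : Type*} [Field F] (c : ℤ) (x : LaurentSeries F)
    (h : ∀ k < c, x.coeff k = 0) :
    ∃ p : PowerSeries F, x = HahnSeries.single c 1 * HahnSeries.ofPowerSeries ℤ F p ∧
      PowerSeries.constantCoeff p = x.coeff c := by
  refine ⟨PowerSeries.mk fun m => x.coeff (c + m), ?_, by simp⟩
  ext k
  rw [HahnSeries.coeff_single_mul, one_mul, PowerSeries.coeff_coe]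
  split_ifs with hk
  · exact h k (by omega)
  · rw [PowerSeries.coeff_mk]; congr 1; omega

theorem km_prod_single {F : Type*} [Field F] {ι : Type*} (s : Finset ι) (c : ι → ℤ) :
    ∏ i ∈ s, (HahnSeries.single (c i) 1 : LaurentSeries F) = HahnSeries.single (∑ i ∈ s, c i) 1 := by
  classical
  induction s using Finset.induction_on with
  | empty => simp
  | insert a s ha ih => rw [Finset.prod_insert ha, Finset.sum_insert ha, ih]; simp

theorem km_det {F : Type*} [Field F] {n : ℕ} (M : Matrix (Fin n) (Fin n) (LaurentSeries F))
    (c : Fin n → ℤ) (h : ∀ i j, ∀ k < c i, (M i j).coeff k = 0) :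
    (∀ k < ∑ i, c i, M.det.coeff k = 0) ∧
      M.det.coeff (∑ i, c i) = (Matrix.of fun i j => (M i j).coeff (c i)).det := by
  choose p hp hp0 using fun i j => km_ge_iff (c i) (M i j) (h i j)
  have hM : M = Matrix.diagonal (fun i => (HahnSeries.single (c i) 1 : LaurentSeries F)) *
      (HahnSeries.ofPowerSeries ℤ F).mapMatrix (Matrix.of p) := by
    ext1 i j
    rw [Matrix.diagonal_mul]
    exact hp i j
  have hd : M.det = HahnSeries.single (∑ i, c i) 1 *
      HahnSeries.ofPowerSeries ℤ F (Matrix.of p).det := by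
    conv_lhs => rw [hM]
    rw [Matrix.det_mul, Matrix.det_diagonal, km_prod_single, RingHom.map_det]
  have hc : (Matrix.of fun i j => (M i j).coeff (c i)) = 
      (PowerSeries.constantCoeff (R := F)).mapMatrix (Matrix.of p) := by
    ext1 i j
    exact (hp0 i j).symm
  rw [hd, hc, ← RingHom.map_det]
  refine ⟨fun k hk => ?_, ?_⟩
  · rw [HahnSeries.coeff_single_mul, PowerSeries.coeff_coe, if_pos (by omega), mul_zero]
  · rw [HahnSeries.coeff_single_mul, PowerSeries.coeff_coe, sub_self]
    simp

theorem km_order_eq {F : Type*} [Field F] (x : LaurentSeries F) (c : ℤ)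
    (h : ∀ k < c, x.coeff k = 0) (hc : x.coeff c ≠ 0) : x ≠ 0 ∧ x.order = c := by
  have hx : x ≠ 0 := by rintro rfl; simp at hc
  exact ⟨hx, le_antisymm (HahnSeries.order_le_of_coeff_ne_zero hc)
    ((HahnSeries.le_order_iff_forall hx).2 h)⟩

/-- `(h, c)` is admissible: `h` invertible and `L_i ⊆ t^{c_i} h⁻¹ O^n`. -/
def KMAdm {F : Type*} [Field F] {n : ℕ}
    (Ls : Fin n → Submodule (PowerSeries F) (Fin n → LaurentSeries F))
    (h : Matrix (Fin n) (Fin n) (LaurentSeries F)) (c : Fin n → ℤ) : Prop :=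
  h.det ≠ 0 ∧ ∀ i, ∀ v ∈ Ls i, ∀ j, ∀ k < c i, (h.mulVec v j).coeff k = 0

theorem km_rows {F : Type*} [Field F] {n : ℕ}
    (h : Matrix (Fin n) (Fin n) (LaurentSeries F)) (v : Fin n → Fin n → LaurentSeries F) :
    (Matrix.of fun i => h.mulVec (v i)) = Matrix.of v * h.transpose := by
  ext1 i j
  simp [Matrix.mul_apply, Matrix.mulVec, dotProduct, mul_comm]

theorem km_weak {F : Type*} [Field F] {n : ℕ}
    (h : Matrix (Fin n) (Fin n) (LaurentSeries F)) (c : Fin n → ℤ) (hd : h.det ≠ 0)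
    (v : Fin n → Fin n → LaurentSeries F) (hv : (Matrix.of v).det ≠ 0)
    (hc : ∀ i j, ∀ k < c i, (h.mulVec (v i) j).coeff k = 0) :
    -h.det.order + ∑ i, c i ≤ (Matrix.of v).det.order := by
  have h1 := (km_det (Matrix.of fun i => h.mulVec (v i)) c (fun i j => hc i j)).1
  rw [km_rows, Matrix.det_mul, Matrix.det_transpose,
    ← HahnSeries.le_order_iff_forall (mul_ne_zero hv hd), HahnSeries.order_mul hv hd] at h1
  linarith

theorem km_exists_adm {F : Type*} [Field F] {n : ℕ}
    (Ls : Fin n → Submodule (PowerSeries F) (Fin n → LaurentSeries F))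
    (hLs : ∀ i, IsFullLattice (Ls i)) : ∃ h c, KMAdm Ls h c := by
  have : ∀ i, ∃ c : ℤ, ∀ v ∈ Ls i, ∀ j, ∀ k < c, (v j).coeff k = 0 := by
    intro i
    obtain ⟨u, -, hu⟩ := hLs i
    obtain ⟨c, hc⟩ : ∃ c : ℤ, ∀ p : Fin n × Fin n, c ≤ (u p.1 p.2).order := by
      obtain ⟨c, hc⟩ := (Set.finite_range fun p : Fin n × Fin n => (u p.1 p.2).order).bddBelow
      exact ⟨c, fun p => hc ⟨p, rfl⟩⟩
    refine ⟨c, fun v hv => ?_⟩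
    rw [hu] at hv
    induction hv using Submodule.span_induction with
    | mem x hx =>
      obtain ⟨r, rfl⟩ := hx
      intro j k hk
      exact HahnSeries.coeff_eq_zero_of_lt_order (hk.trans_le (hc (r, j)))
    | zero => simp
    | add x y _ _ hx hy => intro j k hk; simp [hx j k hk, hy j k hk]
    | smul p x _ hx =>
      intro j k hk
      obtain ⟨q, hq, -⟩ := km_ge_iff c (x j) (hx j)
      rw [Pi.smul_apply, Algebra.smul_def, LaurentSeries.coe_algebraMap, hq, mul_left_comm,
        ← map_mul, HahnSeries.coeff_single_mul, PowerSeries.coeff_coe, if_pos (by omega), mul_zero]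
  choose c hc using this
  exact ⟨1, c, by simp, fun i v hv j k hk => by simpa using hc i v hv j k hk⟩

/-- The leading-coefficient subspace. -/
def kmV {F : Type*} [Field F] {n : ℕ}
    (M : Submodule (PowerSeries F) (Fin n → LaurentSeries F))
    (h : Matrix (Fin n) (Fin n) (LaurentSeries F)) (c : ℤ) : Submodule F (Fin n → F) where
  carrier := {y | ∃ v ∈ M, ∀ j, y j = (h.mulVec v j).coeff c}
  add_mem' := by
    rintro x y ⟨v, hv, hx⟩ ⟨w, hw, hy⟩
    exact ⟨v + w, M.add_mem hv hw, fun j => by simp [Matrix.mulVec_add, hx, hy]⟩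
  zero_mem' := ⟨0, M.zero_mem, fun j => by simp⟩
  smul_mem' := by
    rintro r x ⟨v, hv, hx⟩
    refine ⟨PowerSeries.C r • v, M.smul_mem _ hv, fun j => ?_⟩
    have : (PowerSeries.C r • v) = (HahnSeries.C r : LaurentSeries F) • v := by
      ext1 j
      rw [Pi.smul_apply, Algebra.smul_def, LaurentSeries.coe_algebraMap, 
        HahnSeries.ofPowerSeries_C]
      rfl
    rw [this, Matrix.mulVec_smul, Pi.smul_apply, Pi.smul_apply, hx, smul_eq_mul, smul_eq_mul,
      HahnSeries.C_mul_eq_smul, HahnSeries.coeff_smul, smul_eq_mul]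

open Module in
theorem km_improve {F : Type*} [Field F] {n : ℕ}
    (Ls : Fin n → Submodule (PowerSeries F) (Fin n → LaurentSeries F))
    (h : Matrix (Fin n) (Fin n) (LaurentSeries F)) (c : Fin n → ℤ) (hA : KMAdm Ls h c)
    (I : Finset (Fin n))
    (hI : finrank F (⨆ i ∈ I, kmV (Ls i) h (c i) : Submodule F (Fin n → F)) < I.card) :
    ∃ h' c', KMAdm Ls h' c' ∧
      -h.det.order + ∑ i, c i < -h'.det.order + ∑ i, c' i := by
  classical
  obtain ⟨Q, S, hQ, hS, hW⟩ := km_adapted (⨆ i ∈ I, kmV (Ls i) h (c i))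
  let d : Fin n → ℤ := fun j => if j ∈ S then 0 else -1
  let D : Matrix (Fin n) (Fin n) (LaurentSeries F) :=
    Matrix.diagonal fun j => HahnSeries.single (d j) 1
  let Q' : Matrix (Fin n) (Fin n) (LaurentSeries F) := (HahnSeries.C).mapMatrix Q
  have hD : D.det = HahnSeries.single (∑ j, d j) 1 := by
    rw [Matrix.det_diagonal, km_prod_single]
  have hQ' : Q'.det = HahnSeries.C Q.det := by rw [RingHom.map_det]
  have hD0 : D.det ≠ 0 := by rw [hD]; simp
  have hQ0 : Q'.det ≠ 0 := by rw [hQ']; simpa using hQ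
  have hdet : (D * (Q' * h)).det ≠ 0 := by
    rw [Matrix.det_mul, Matrix.det_mul]; exact mul_ne_zero hD0 (mul_ne_zero hQ0 hA.1)
  have hord : (D * (Q' * h)).det.order = ∑ j, d j + h.det.order := by
    rw [Matrix.det_mul, Matrix.det_mul, HahnSeries.order_mul hD0 (mul_ne_zero hQ0 hA.1),
      HahnSeries.order_mul hQ0 hA.1, hD, hQ', HahnSeries.order_C,
      HahnSeries.order_single one_ne_zero, zero_add]
  have hcoef : ∀ v j k, ((D * (Q' * h)).mulVec v j).coeff k =
      Q.mulVec (fun l => (h.mulVec v l).coeff (k - d j)) j := by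
    intro v j k
    rw [← Matrix.mulVec_mulVec, ← Matrix.mulVec_mulVec, Matrix.mulVec_diagonal,
      HahnSeries.coeff_single_mul, one_mul]
    simp only [Matrix.mulVec, dotProduct, HahnSeries.coeff_sum]
    refine Finset.sum_congr rfl fun l _ => ?_
    show (HahnSeries.C (Q j l) * _ : LaurentSeries F).coeff _ = _
    rw [HahnSeries.C_mul_eq_smul, HahnSeries.coeff_smul, smul_eq_mul]
    simp [HahnSeries.coeff_sum]
  refine ⟨D * (Q' * h), fun i => if i ∈ I then c i else c i - 1, ⟨hdet, ?_⟩, ?_⟩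
  · intro i v hv j k hk
    rw [hcoef]
    by_cases hlt : k - d j < c i
    · have : (fun l => (h.mulVec v l).coeff (k - d j)) = 0 := by
        ext l; exact hA.2 i v hv l _ hlt
      rw [this]; simp
    · by_cases hi : i ∈ I
      · simp only [hi, if_true] at hk
        have hj : j ∉ S := by
          intro hj; simp only [d, hj, if_true] at hlt; omega
        have hkk : k - d j = c i := by
          simp only [d, hj, if_false] at hlt ⊢; omega
        refine hW _ ?_ j hj
        rw [hkk]
        exact (le_iSup₂ (f := fun i (_ : i ∈ I) => kmV (Ls i) h (c i)) i hi) ⟨v, hv, fun _ => rfl⟩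
      · simp only [hi, if_false] at hk
        have : -1 ≤ d j := by simp only [d]; split_ifs <;> omega
        omega
  · rw [hord]
    have e1 : ∑ j, d j = S.card - n := by
      have : ∀ j, d j = (if j ∈ S then 1 else 0) - 1 := by
        intro j; simp only [d]; split_ifs <;> rfl
      simp [this, Finset.sum_sub_distrib]
    have e2 : ∑ i, (if i ∈ I then c i else c i - 1) = ∑ i, c i + (I.card - n) := by
      have : ∀ i, (if i ∈ I then c i else c i - 1) = c i + ((if i ∈ I then 1 else 0) - 1) := by
        intro j; split_ifs <;> ring
      simp [this, Finset.sum_sub_distrib, Finset.sum_add_distrib]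
    rw [e1, e2]
    have : (S.card : ℤ) < I.card := by rw [hS]; exact_mod_cast hI
    linarith

theorem exists_lattice_valDet_add_sum_c_eq_A {F : Type*} [Field F] {n : ℕ}
    (Ls : Fin n → Submodule (PowerSeries F) (Fin n → LaurentSeries F))
    (hLs : ∀ i, IsFullLattice (Ls i))
    (a : ℤ) (ha : AIs Ls a) :
    ∃ (L : Submodule (PowerSeries F) (Fin n → LaurentSeries F)) (dL : ℤ) (c : Fin n → ℤ),
      IsFullLattice L ∧ HasValDet L dL ∧ (∀ i, CLat L (Ls i) (c i)) ∧
        dL + ∑ i, c i = a := by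
  obtain ⟨⟨v0, hv0, hv0d, hv0a⟩, hmin⟩ := ha
  obtain ⟨m, ⟨h, c, hA, hm⟩, hmax⟩ := Int.exists_greatest_of_bdd
    (P := fun z => ∃ h c, KMAdm Ls h c ∧ -h.det.order + ∑ i, c i = z)
    ⟨a, by
      rintro z ⟨h, c, hA, rfl⟩
      rw [← hv0a]
      exact km_weak h c hA.1 v0 hv0d fun i => hA.2 i _ (hv0 i)⟩
    (by
      obtain ⟨h, c, hA⟩ := km_exists_adm Ls hLs
      exact ⟨_, h, c, hA, rfl⟩)
  obtain ⟨y, hy, hyl⟩ := km_rado _ (fun i => kmV (Ls i) h (c i)) rfl (by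
    intro I
    by_contra hI
    obtain ⟨h', c', hA', hlt⟩ := km_improve Ls h c hA I (not_le.mp hI)
    have := hmax _ ⟨h', c', hA', rfl⟩
    omega)
  choose v hv hvy using hy
  have hydet : (Matrix.of y).det ≠ 0 := by
    have : IsUnit (Matrix.of y) := Matrix.linearIndependent_rows_iff_isUnit.mp hyl
    exact ((Matrix.isUnit_iff_isUnit_det _).mp this).ne_zero
  have hdt := km_det (Matrix.of fun i => h.mulVec (v i)) c (fun i j => hA.2 i _ (hv i) j)
  have hcd : (Matrix.of fun i j => ((Matrix.of fun i => h.mulVec (v i)) i j).coeff (c i)) =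
      Matrix.of y := by
    ext i j; exact (hvy i j).symm
  rw [hcd] at hdt
  obtain ⟨hne, hor⟩ := km_order_eq _ _ hdt.1 (by rw [hdt.2]; exact hydet)
  rw [km_rows, Matrix.det_mul, Matrix.det_transpose] at hne hor
  have hvd := left_ne_zero_of_mul hne
  rw [HahnSeries.order_mul hvd hA.1] at hor
  have hva : (Matrix.of v).det.order = a := by
    apply le_antisymm _ (hmin ⟨v, hv, hvd, rfl⟩)
    have := km_weak h c hA.1 v0 hv0d fun i => hA.2 i _ (hv0 i)
    rw [hv0a] at this
    linarith
  let w : Fin n → Fin n → LaurentSeries F := fun i => (tpow (-c i) : LaurentSeries F) • v i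
  have hwm : Matrix.of w = Matrix.diagonal (fun i => (HahnSeries.single (-c i) 1 : LaurentSeries F))
      * Matrix.of v := by
    ext1 i j; rw [Matrix.diagonal_mul]; rfl
  have hwdet : (Matrix.of w).det = HahnSeries.single (∑ i, -c i) 1 * (Matrix.of v).det := by
    rw [hwm, Matrix.det_mul, Matrix.det_diagonal, km_prod_single]
  have hs0 : (HahnSeries.single (∑ i, -c i) 1 : LaurentSeries F) ≠ 0 := by simp
  have hwd : (Matrix.of w).det ≠ 0 := by rw [hwdet]; exact mul_ne_zero hs0 hvd
  have hwo : (Matrix.of w).det.order = a - ∑ i, c i := by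
    rw [hwdet, HahnSeries.order_mul hs0 hvd, HahnSeries.order_single one_ne_zero, hva,
      Finset.sum_neg_distrib]; ring
  have hwb : IsLatticeBasis (Submodule.span (PowerSeries F) (Set.range w)) w := by
    refine ⟨?_, rfl⟩
    have : IsUnit (Matrix.of w) := (Matrix.isUnit_iff_isUnit_det _).mpr hwd.isUnit
    exact Matrix.linearIndependent_rows_iff_isUnit.mpr this
  -- coefficients after scaling
  have hscale : ∀ (μ : ℤ) (x : Fin n → LaurentSeries F) j k,
      (h.mulVec ((tpow μ : LaurentSeries F) • x) j).coeff k = (h.mulVec x j).coeff (k - μ) := by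
    intro μ x j k
    rw [Matrix.mulVec_smul, Pi.smul_apply, smul_eq_mul, tpow, HahnSeries.coeff_single_mul, one_mul]
  have hint : ∀ x ∈ Submodule.span (PowerSeries F) (Set.range w), ∀ j, ∀ k < 0,
      (h.mulVec x j).coeff k = 0 := by
    intro x hx
    induction hx using Submodule.span_induction with
    | mem x hx =>
      obtain ⟨r, rfl⟩ := hx
      intro j k hk
      rw [hscale]
      exact hA.2 r _ (hv r) _ _ (by omega)
    | zero => simp
    | add x y _ _ hx hy => intro j k hk; simp [Matrix.mulVec_add, hx j k hk, hy j k hk]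
    | smul p x _ hx =>
      intro j k hk
      obtain ⟨q, hq, -⟩ := km_ge_iff 0 (h.mulVec x j) (hx j)
      rw [Matrix.mulVec_smul, Pi.smul_apply, Algebra.smul_def, LaurentSeries.coe_algebraMap, hq,
        mul_left_comm, ← map_mul, HahnSeries.coeff_single_mul, PowerSeries.coeff_coe,
        if_pos (by omega), mul_zero]
  -- key lower bound
  have hlow : ∀ i x, IsGen (Submodule.span (PowerSeries F) (Set.range w)) x →
      ∀ μ : ℤ, (tpow μ : LaurentSeries F) • x ∈ Ls i → c i ≤ μ := by
    rintro i x ⟨u, r, ⟨hul, hus⟩, rfl⟩ μ hμ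
    by_contra hlt
    have hud : (Matrix.of u).det ≠ 0 := by
      have : IsUnit (Matrix.of u) := Matrix.linearIndependent_rows_iff_isUnit.mp hul
      exact ((Matrix.isUnit_iff_isUnit_det _).mp this).ne_zero
    have h1 := km_weak h (Pi.single r 1) hA.1 u hud (by
      intro i' j k hk
      by_cases hi' : i' = r
      · subst hi'
        rw [Pi.single_eq_same] at hk
        have := hA.2 i _ hμ j (k + μ) (by omega)
        rwa [hscale, add_sub_cancel_right] at this
      · rw [Pi.single_eq_of_ne hi'] at hk
        refine hint _ ?_ j k hk
        rw [hus]; exact Submodule.subset_span ⟨i', rfl⟩)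
    have h2 : (Matrix.of u).det.order ≤ (Matrix.of w).det.order := by
      have : ∀ l, ∃ p : Fin n → PowerSeries F, ∑ s, p s • u s = w l := by
        intro l
        rw [← Submodule.mem_span_range_iff_exists_fun, ← hus]
        exact Submodule.subset_span ⟨l, rfl⟩
      choose p hp using this
      have hw : Matrix.of w = (HahnSeries.ofPowerSeries ℤ F).mapMatrix (Matrix.of p) *
          Matrix.of u := by
        ext1 l j
        rw [Matrix.mul_apply]
        simp only [Matrix.of_apply, ← hp, Finset.sum_apply, Pi.smul_apply, Algebra.smul_def,
          LaurentSeries.coe_algebraMap]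
        rfl
      rw [hw, Matrix.det_mul, ← RingHom.map_det] at hwd ⊢
      have hp0 := left_ne_zero_of_mul hwd
      rw [HahnSeries.order_mul hp0 hud]
      have : 0 ≤ (HahnSeries.ofPowerSeries ℤ F (Matrix.of p).det).order := by
        rw [HahnSeries.le_order_iff_forall hp0]
        intro j hj
        rw [PowerSeries.coeff_coe, if_pos hj]
      linarith
    rw [Finset.sum_pi_single'] at h1
    simp only [Finset.mem_univ, if_true] at h1
    linarith
  refine ⟨Submodule.span (PowerSeries F) (Set.range w), a - ∑ i, c i, c, ⟨w, hwb⟩, ⟨w, hwb, hwo⟩,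
    fun i => ⟨⟨w i, ⟨w, i, hwb, rfl⟩, ?_, ?_⟩, ?_⟩, by ring⟩
  · have : (tpow (c i) : LaurentSeries F) • w i = v i := by
      simp [w, tpow, smul_smul]
    show (tpow (c i) : LaurentSeries F) • w i ∈ Ls i
    rw [this]; exact hv i
  · exact fun μ hμ => hlow i (w i) ⟨w, i, hwb, rfl⟩ μ hμ
  · rintro μ ⟨x, hx, hxμ, -⟩
    exact hlow i x hx μ hxμ
end

section
/- Let O = F[[t]], K = F((t)), L and M full-rank lattices in K^n, and let L' = t^{-1}W + L where W lifts the subspace W̃ ⊆ L/tL spanned by the images of the tight generators of L with respect to M. If every tight generator of L with respect to M has image in W̃, then c(L', M) = c(L, M) + 1; if some tight generator of L with respect to M has image outside W̃, then c(L', M) = c(L, M). -/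
section Helpers
variable {F : Type*} [Field F] {n : ℕ}

lemma aux_X_smul (w : Fin n → LaurentSeries F) :
    (PowerSeries.X : PowerSeries F) • w = (tpow 1 : LaurentSeries F) • w := by
  rw [← algebraMap_smul (LaurentSeries F) (PowerSeries.X : PowerSeries F) w,
    LaurentSeries.coe_algebraMap, HahnSeries.ofPowerSeries_X]
  rfl

lemma aux_C_smul (a : F) (w : Fin n → LaurentSeries F) :
    (PowerSeries.C a : PowerSeries F) • w = (algebraMap F (LaurentSeries F) a) • w := by
  rw [← algebraMap_smul (LaurentSeries F) (PowerSeries.C a : PowerSeries F) w,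
    LaurentSeries.coe_algebraMap, HahnSeries.ofPowerSeries_C]
  rw [HahnSeries.algebraMap_apply', PowerSeries.algebraMap_apply, HahnSeries.ofPowerSeries_C]
  rfl

lemma aux_tpow_smul (a b : ℤ) (w : Fin n → LaurentSeries F) :
    (tpow a : LaurentSeries F) • (tpow b : LaurentSeries F) • w
      = (tpow (a + b) : LaurentSeries F) • w := by
  rw [smul_smul]
  simp [tpow]

lemma aux_tpow_zero (w : Fin n → LaurentSeries F) :
    (tpow 0 : LaurentSeries F) • w = w := by
  have : (tpow 0 : LaurentSeries F) = 1 := rfl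
  rw [this, one_smul]

lemma aux_X_tinv (w : Fin n → LaurentSeries F) :
    (PowerSeries.X : PowerSeries F) • (tpow (-1) : LaurentSeries F) • w = w := by
  rw [aux_X_smul, aux_tpow_smul]
  exact aux_tpow_zero w

lemma aux_X_inj {x y : Fin n → LaurentSeries F}
    (h : (PowerSeries.X : PowerSeries F) • x = (PowerSeries.X : PowerSeries F) • y) : x = y := by
  rw [aux_X_smul, aux_X_smul] at h
  have := congrArg (fun z => (tpow (-1) : LaurentSeries F) • z) h
  simp only [aux_tpow_smul] at this
  simpa [aux_tpow_zero] using this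

lemma aux_cvec (w : Fin n → LaurentSeries F)
    (M : Submodule (PowerSeries F) (Fin n → LaurentSeries F)) (μ : ℤ) (h : CVec w M μ) (k : ℤ) :
    CVec ((tpow k : LaurentSeries F) • w) M (μ - k) := by
  constructor
  · have := h.1
    simp only [Set.mem_ofPred_eq, aux_tpow_smul] at this ⊢
    simpa using this
  · intro ν hν
    simp only [Set.mem_ofPred_eq, aux_tpow_smul] at hν
    have := h.2 hν
    omega

lemma aux_lattice {L : Submodule (PowerSeries F) (Fin n → LaurentSeries F)}
    (hL : IsFullLattice L) : Submodule.IsLattice (LaurentSeries F) L := by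
  obtain ⟨v, hv, rfl⟩ := hL
  refine ⟨Submodule.fg_span (Set.finite_range v), ?_⟩
  rw [Submodule.span_span_of_tower]
  exact (hv.span_eq_top_of_card_eq_finrank' (by simp))

lemma aux_lattice_full {L : Submodule (PowerSeries F) (Fin n → LaurentSeries F)}
    (hL : Submodule.IsLattice (LaurentSeries F) L) : IsFullLattice L := by
  have hr : Module.finrank (PowerSeries F) L = n := by
    simpa using Submodule.IsLattice.finrank_of_pi (K := LaurentSeries F) L
  have : Module.Free (PowerSeries F) L := Submodule.IsLattice.free (LaurentSeries F) L
  have : Module.Finite (PowerSeries F) L := Submodule.IsLattice.finite (LaurentSeries F) L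
  let b := Module.finBasisOfFinrankEq (PowerSeries F) L hr
  refine ⟨fun i => (b i : Fin n → LaurentSeries F), ?_, ?_⟩
  · have := (b.extendOfIsLattice (LaurentSeries F)).linearIndependent
    have heq : (fun i => (b i : Fin n → LaurentSeries F))
        = ⇑(b.extendOfIsLattice (LaurentSeries F)) := by
      funext i
      rw [Module.Basis.extendOfIsLattice_apply]
    rw [heq]
    exact this
  · have h := congrArg (Submodule.map L.subtype) b.span_eq
    rw [Submodule.map_span, ← Set.range_comp, Submodule.map_top, Submodule.range_subtype] at h
    exact h.symm

lemma aux_gen_iff {L : Submodule (PowerSeries F) (Fin n → LaurentSeries F)}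
    (hL : IsFullLattice L) (w : Fin n → LaurentSeries F) :
    IsGen L w ↔ w ∈ L ∧ ¬ MemTL L w := by
  constructor
  · rintro ⟨v, i, ⟨hv, rfl⟩, rfl⟩
    refine ⟨Submodule.subset_span ⟨i, rfl⟩, ?_⟩
    rintro ⟨y, hy, h⟩
    obtain ⟨a, rfl⟩ := (Submodule.mem_span_range_iff_exists_fun _).mp hy
    have hv' : LinearIndependent (PowerSeries F) v := hv.restrict_scalars' (PowerSeries F)
    have h2 : ∑ j, (PowerSeries.X * a j - if j = i then 1 else 0) • v j = 0 := by
      simp only [sub_smul, Finset.sum_sub_distrib, mul_smul, ← Finset.smul_sum, ← h]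
      simp
    have h3 := Fintype.linearIndependent_iff.mp hv' _ h2 i
    have h4 := congrArg (PowerSeries.constantCoeff (R := F)) h3
    simp at h4
  · rintro ⟨hw, hn⟩
    have := aux_lattice hL
    obtain ⟨v, hv, hLv⟩ := hL
    rw [hLv] at hw
    obtain ⟨a, rfl⟩ := (Submodule.mem_span_range_iff_exists_fun _).mp hw
    have : ∃ i, PowerSeries.constantCoeff (a i) ≠ 0 := by
      by_contra! hc
      apply hn
      choose b hb using fun i => PowerSeries.X_dvd_iff.mpr (hc i)
      refine ⟨∑ i, b i • v i, ?_, ?_⟩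
      · rw [hLv]
        exact (Submodule.mem_span_range_iff_exists_fun _).mpr ⟨b, rfl⟩
      · simp [Finset.smul_sum, smul_smul, hb]
    obtain ⟨i, hi⟩ := this
    have hu : IsUnit (a i) := PowerSeries.isUnit_iff_constantCoeff.mpr (isUnit_iff_ne_zero.mpr hi)
    obtain ⟨e, he⟩ := hu
    set w := ∑ i, a i • v i with hwdef
    have hspan : L = Submodule.span (PowerSeries F) (Set.range (Function.update v i w)) := by
      apply le_antisymm
      · rw [hLv, Submodule.span_le]
        have hj : ∀ j, j ≠ i →
            v j ∈ Submodule.span (PowerSeries F) (Set.range (Function.update v i w)) := by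
          intro j hj
          exact Submodule.subset_span ⟨j, by simp [hj]⟩
        rintro _ ⟨j, rfl⟩
        by_cases hji : j = i
        · subst hji
          have h1 : v j = (↑e⁻¹ : PowerSeries F) • (w - ∑ k ∈ Finset.univ.erase j, a k • v k) := by
            rw [hwdef, ← Finset.add_sum_erase _ _ (Finset.mem_univ j), add_sub_cancel_right,
              smul_smul, ← he, Units.inv_mul, one_smul]
          rw [SetLike.mem_coe, h1]
          refine Submodule.smul_mem _ _ (Submodule.sub_mem _ (Submodule.subset_span ⟨j, by simp⟩)
            (Submodule.sum_mem _ fun k hk => Submodule.smul_mem _ _ (hj k (Finset.ne_of_mem_erase hk))))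
        · exact hj j hji
      · rw [Submodule.span_le]
        rintro _ ⟨j, rfl⟩
        by_cases hji : j = i
        · subst hji
          simpa [hLv] using hw
        · simp only [Function.update_of_ne hji, hLv]
          exact Submodule.subset_span ⟨j, rfl⟩
    refine ⟨Function.update v i w, i, ⟨?_, hspan⟩, by simp⟩
    apply linearIndependent_of_top_le_span_of_card_eq_finrank
    · rw [← Submodule.span_span_of_tower (PowerSeries F), ← hspan,
        Submodule.IsLattice.span_eq_top]
    · simp

lemma aux_memTL_X {L : Submodule (PowerSeries F) (Fin n → LaurentSeries F)}
    {w : Fin n → LaurentSeries F} :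
    MemTL L ((PowerSeries.X : PowerSeries F) • w) ↔ w ∈ L := by
  constructor
  · rintro ⟨y, hy, h⟩
    rwa [aux_X_inj h]
  · exact fun h => ⟨w, h, rfl⟩

lemma aux_mem_sup {d : ℕ} {L : Submodule (PowerSeries F) (Fin n → LaurentSeries F)}
    (u : Fin d → Fin n → LaurentSeries F) (hu : ∀ i, u i ∈ L) (x : Fin n → LaurentSeries F) :
    x ∈ Submodule.span (PowerSeries F)
          (Set.range fun i => (tpow (-1) : LaurentSeries F) • u i) ⊔ L ↔
    ∃ a : Fin d → F, MemTL L ((PowerSeries.X : PowerSeries F) • x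
      - ∑ i, algebraMap F (LaurentSeries F) (a i) • u i) := by
  rw [Submodule.mem_sup]
  constructor
  · rintro ⟨y, hy, z, hz, rfl⟩
    obtain ⟨b, rfl⟩ := (Submodule.mem_span_range_iff_exists_fun _).mp hy
    have hb : ∀ i, PowerSeries.X ∣ b i - PowerSeries.C (PowerSeries.constantCoeff (b i)) := by
      intro i
      rw [PowerSeries.X_dvd_iff]
      simp
    choose c hc using hb
    refine ⟨fun i => PowerSeries.constantCoeff (b i), z + ∑ i, c i • u i,
      L.add_mem hz (L.sum_mem fun i _ => L.smul_mem _ (hu i)), ?_⟩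
    simp only [← aux_C_smul, smul_add, Finset.smul_sum]
    simp only [smul_comm (PowerSeries.X : PowerSeries F) (b _), aux_X_tinv]
    have : ∀ i, b i • u i = (PowerSeries.X : PowerSeries F) • c i • u i
        + PowerSeries.C (PowerSeries.constantCoeff (b i)) • u i := by
      intro i
      rw [smul_smul, ← hc, ← add_smul, sub_add_cancel]
    simp only [this, Finset.sum_add_distrib]
    abel
  · rintro ⟨a, y, hy, h⟩
    refine ⟨∑ i, (PowerSeries.C (a i) : PowerSeries F) • (tpow (-1) : LaurentSeries F) • u i,
      (Submodule.mem_span_range_iff_exists_fun _).mpr ⟨_, rfl⟩, y, hy, ?_⟩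
    apply aux_X_inj
    rw [smul_add, ← h, Finset.smul_sum]
    simp only [smul_comm (PowerSeries.X : PowerSeries F) (PowerSeries.C _), aux_X_tinv]
    simp only [aux_C_smul]
    abel

end Helpers

/-- Key step of the linearized Kuhn–Munkres algorithm.  Let `L, M` be full-rank lattices,
`c(L,M) = cLM`, and let `W ⊆ L` be the `O`-submodule generated by `u_1, ..., u_d ∈ L`
whose images in `L/tL` are linearly independent over `F`, lifting the subspace
`W̃ ⊆ L/tL` they span.  Set `L' = t⁻¹W + L`.  If every tight generator of `L` with
respect to `M` has image in `W̃`, then `c(L',M) = c(L,M) + 1`; if some tight generator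
has image outside `W̃`, then `c(L',M) = c(L,M)`. -/
theorem cLat_tInvW_add {F : Type*} [Field F] {n d : ℕ}
    (L M : Submodule (PowerSeries F) (Fin n → LaurentSeries F))
    (hL : IsFullLattice L) (hM : IsFullLattice M)
    (cLM : ℤ) (hcLM : CLat L M cLM)
    (u : Fin d → Fin n → LaurentSeries F) (hu : ∀ i, u i ∈ L)
    (hindep : ∀ a : Fin d → F,
      MemTL L (∑ i, algebraMap F (LaurentSeries F) (a i) • u i) → a = 0) :
    -- `L' = t⁻¹ W + L`
    letI L' : Submodule (PowerSeries F) (Fin n → LaurentSeries F) :=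
      Submodule.span (PowerSeries F)
          (Set.range fun i => (tpow (-1) : LaurentSeries F) • u i) ⊔ L
    -- `w` has image in `W̃` iff `w ≡ ∑ a i • u i mod tL` for some coefficients `a`
    letI imageInW : (Fin n → LaurentSeries F) → Prop := fun w =>
      ∃ a : Fin d → F, MemTL L (w - ∑ i, algebraMap F (LaurentSeries F) (a i) • u i)
    ((∀ w, IsGen L w → CVec w M cLM → imageInW w) → CLat L' M (cLM + 1)) ∧
    ((∃ w, IsGen L w ∧ CVec w M cLM ∧ ¬ imageInW w) → CLat L' M cLM) := by
  set L' : Submodule (PowerSeries F) (Fin n → LaurentSeries F) :=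
      Submodule.span (PowerSeries F)
          (Set.range fun i => (tpow (-1) : LaurentSeries F) • u i) ⊔ L with hL'def
  set I : (Fin n → LaurentSeries F) → Prop := fun w =>
      ∃ a : Fin d → F, MemTL L (w - ∑ i, algebraMap F (LaurentSeries F) (a i) • u i) with hIdef
  have hL' : IsFullLattice L' := by
    have := aux_lattice hL
    apply aux_lattice_full
    apply Submodule.IsLattice.of_le_of_isLattice_of_fg (M := L) _ le_sup_right
    exact Submodule.FG.sup (Submodule.fg_span (Set.finite_range _))
      (Submodule.IsLattice.fg (A := LaurentSeries F))
  have hmem : ∀ x, x ∈ L' ↔ I ((PowerSeries.X : PowerSeries F) • x) := aux_mem_sup u hu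
  have hI : ∀ x, MemTL L' x ↔ I x := by
    intro x
    rw [← aux_X_tinv x, aux_memTL_X, hmem]
  have hIL : ∀ x, I x → x ∈ L := by
    rintro x ⟨a, y, hy, h⟩
    rw [sub_eq_iff_eq_add] at h
    rw [h]
    refine L.add_mem (L.smul_mem _ hy) (L.sum_mem fun i _ => ?_)
    rw [← aux_C_smul]
    exact L.smul_mem _ (hu i)
  have hTI : ∀ x, MemTL L x → I x := fun x hx => ⟨0, by simpa using hx⟩
  have hgen' : ∀ w, IsGen L' w ↔ I ((PowerSeries.X : PowerSeries F) • w) ∧ ¬ I w := by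
    intro w
    rw [aux_gen_iff hL', hmem, hI]
  have low : ∀ w μ, IsGen L' w → CVec w M μ →
      (cLM + 1 ≤ μ) ∨ (IsGen L w ∧ ¬ I w) := by
    intro w μ hw hμ
    rw [hgen'] at hw
    by_cases hwL : w ∈ L
    · exact Or.inr ⟨(aux_gen_iff hL w).mpr ⟨hwL, fun h => hw.2 (hTI _ h)⟩, hw.2⟩
    · left
      have hg : IsGen L ((PowerSeries.X : PowerSeries F) • w) :=
        (aux_gen_iff hL _).mpr ⟨hIL _ hw.1, fun h => hwL (aux_memTL_X.mp h)⟩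
      rw [aux_X_smul] at hg
      have := hcLM.2 ⟨_, hg, aux_cvec w M μ hμ 1⟩
      omega
  constructor
  · intro hall
    constructor
    · obtain ⟨w, hw, hc⟩ := hcLM.1
      refine ⟨(tpow (-1) : LaurentSeries F) • w, ?_, ?_⟩
      · rw [hgen', aux_X_tinv]
        refine ⟨hall w hw hc, fun h => ?_⟩
        have h2 := hIL _ h
        rw [← aux_memTL_X, aux_X_tinv] at h2
        exact ((aux_gen_iff hL w).mp hw).2 h2
      · simpa using aux_cvec w M cLM hc (-1)
    · rintro μ ⟨w, hw, hμ⟩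
      rcases low w μ hw hμ with h | ⟨hg, hn⟩
      · exact h
      · have h1 : cLM ≤ μ := hcLM.2 ⟨w, hg, hμ⟩
        have h2 : μ ≠ cLM := by
          rintro rfl
          exact hn (hall w hg hμ)
        omega
  · rintro ⟨w, hw, hc, hn⟩
    constructor
    · refine ⟨w, ?_, hc⟩
      rw [hgen']
      exact ⟨hTI _ (aux_memTL_X.mpr ((aux_gen_iff hL w).mp hw).1), hn⟩
    · rintro μ ⟨w, hw, hμ⟩
      rcases low w μ hw hμ with h | ⟨hg, hn⟩
      · omega
      · exact hcLM.2 ⟨w, hg, hμ⟩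
end

section
/- Let x_1, x_2, x_3 be points of the affine Grassmannian for SL_n over K = ℝ((t)) (lattices with val(det) = 0), and i+j+k = n with i,j,k ≥ 0. Then f^t_{ijk}(x_1,x_2,x_3) = min over points p of the affine Grassmannian of PGL_n of [ d_i(p,x_1) + d_j(p,x_2) + d_k(p,x_3) ], where d_a(p,x) = ω_a · d(p,x) and f^t_{ijk} is the tropical triple invariant. -/
noncomputable section

/-- `d(L,M) = μ`, the coweight-valued distance: there is an `O`-basis `e_1, ..., e_n` of
`L` and a weakly decreasing sequence `μ_1 ≥ ... ≥ μ_n` (the elementary divisors of `M`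
relative to `L`) such that `t^{-μ_1} e_1, ..., t^{-μ_n} e_n` is an `O`-basis of `M`. -/
def IsDist {F : Type*} [Field F] {n : ℕ}
    (L M : Submodule (PowerSeries F) (Fin n → LaurentSeries F)) (μ : Fin n → ℤ) : Prop :=
  Antitone μ ∧ ∃ v, IsLatticeBasis L v ∧
    IsLatticeBasis M (fun i => (tpow (-(μ i)) : LaurentSeries F) • v i)

/-- `d_k(L,M)`: the sum of the first `k` (i.e. the `k` largest) entries of `d(L,M)`,
the pairing of `d(L,M)` with the fundamental weight `ω_k`. -/
def dPartial {n : ℕ} (k : ℕ) (μ : Fin n → ℤ) : ℤ :=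
  ∑ s ∈ Finset.univ.filter (fun s : Fin n => (s : ℕ) < k), μ s

end

noncomputable section
/-- `d_a(p,x)` normalized to the `PGL_n`/`SL_n` coweight plane: the pairing of the
fundamental weight `ω_a` with the distance `d(p,x)` translated into the plane
`∑ μ_s = 0`; it lies in `(1/n) ℤ`. -/
def dNorm {n : ℕ} (a : ℕ) (μ : Fin n → ℤ) : ℚ :=
  (dPartial a μ : ℚ) - ((a : ℚ) / (n : ℚ)) * ((∑ s, μ s : ℤ) : ℚ)
end

section helpers
open Matrix

abbrev OO := PowerSeries ℝ
abbrev KK := LaurentSeries ℝ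

lemma tpow_mul (a b : ℤ) : (tpow a : KK) * tpow b = tpow (a + b) := by
  simp [tpow, HahnSeries.single_mul_single]

lemma tpow_zero' : (tpow 0 : KK) = 1 := by simp [tpow]

lemma tpow_ne (a : ℤ) : (tpow a : KK) ≠ 0 := by simp [tpow]

lemma order_tpow (a : ℤ) : (tpow a : KK).order = a := by
  simp [tpow]

lemma tpow_nat (m : ℕ) : (tpow (m : ℤ) : KK) = algebraMap OO KK (PowerSeries.X ^ m) := by
  rw [LaurentSeries.coe_algebraMap, PowerSeries.coe_pow]
  simp [tpow, HahnSeries.ofPowerSeries_X, HahnSeries.single_pow]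

lemma tpow_nonneg_mem {m : ℤ} (hm : 0 ≤ m) : ∃ f : OO, algebraMap OO KK f = tpow m := by
  lift m to ℕ using hm
  exact ⟨_, (tpow_nat m).symm⟩

lemma tpow_smul_mem {n : ℕ} (L : Submodule OO (Fin n → KK)) {w : Fin n → KK} (hw : w ∈ L)
    {m : ℤ} (hm : 0 ≤ m) : (tpow m : KK) • w ∈ L := by
  obtain ⟨f, hf⟩ := tpow_nonneg_mem hm
  have e : algebraMap OO KK f • w = f • w := by
    ext t; simp [Algebra.smul_def]
  rw [← hf, e]
  exact L.smul_mem f hw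

lemma algInj : Function.Injective (algebraMap OO KK) := IsFractionRing.injective OO KK

lemma order_alg_nonneg (f : OO) : 0 ≤ (algebraMap OO KK f).order := by
  by_cases h : algebraMap OO KK f = 0
  · rw [h]; simp
  · rw [HahnSeries.le_order_iff_forall h]
    intro m hm
    rw [LaurentSeries.coe_algebraMap, PowerSeries.coeff_coe, if_pos hm]

lemma order_alg_unit {f : OO} (hf : IsUnit f) : (algebraMap OO KK f).order = 0 := by
  obtain ⟨g, hg⟩ := hf.exists_right_inv
  have h : algebraMap OO KK f * algebraMap OO KK g = 1 := by rw [← map_mul, hg, map_one]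
  have h1 := HahnSeries.order_mul (left_ne_zero_of_mul_eq_one h) (right_ne_zero_of_mul_eq_one h)
  rw [h, HahnSeries.order_one] at h1
  have := order_alg_nonneg f
  have := order_alg_nonneg g
  omega

lemma exists_clear_one (x : KK) : ∃ N : ℕ, ∀ m : ℤ, (N : ℤ) ≤ m → ∃ f : OO, tpow m * x = algebraMap OO KK f := by
  refine ⟨(-x.order).toNat, fun m hm => ?_⟩
  obtain ⟨g, hg⟩ := tpow_nonneg_mem (m := m + x.order) (by omega)
  refine ⟨g * x.powerSeriesPart, ?_⟩
  rw [map_mul, hg]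
  have := LaurentSeries.single_order_mul_powerSeriesPart x
  conv_lhs => rw [← this]
  rw [← mul_assoc]
  congr 1
  exact tpow_mul _ _

lemma exists_clear {ι : Type*} [Finite ι] (x : ι → KK) :
    ∃ N : ℕ, ∀ m : ℤ, (N : ℤ) ≤ m → ∀ i, ∃ f : OO, tpow m * x i = algebraMap OO KK f := by
  have := Fintype.ofFinite ι
  choose N hN using fun i => exists_clear_one (x i)
  refine ⟨Finset.univ.sup N, fun m hm i => hN i m ?_⟩
  have : N i ≤ Finset.univ.sup N := Finset.le_sup (Finset.mem_univ i)
  omega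

lemma mem_span_iff {n : ℕ} (P : Fin n → Fin n → KK) (w : Fin n → KK) :
    w ∈ Submodule.span OO (Set.range P) ↔
      ∃ c : Fin n → OO, w = (fun r => algebraMap OO KK (c r)) ᵥ* Matrix.of P := by
  rw [Submodule.mem_span_range_iff_exists_fun]
  refine exists_congr fun c => ?_
  rw [eq_comm]
  have : (∑ i, c i • P i) = (fun r => algebraMap OO KK (c r)) ᵥ* Matrix.of P := by
    ext t
    simp [Matrix.vecMul, dotProduct, Finset.sum_apply, Algebra.smul_def]
  rw [this]

lemma linInd_iff {n : ℕ} (P : Fin n → Fin n → KK) :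
    LinearIndependent KK P ↔ (Matrix.of P).det ≠ 0 := by
  rw [← isUnit_iff_ne_zero, ← Matrix.isUnit_iff_isUnit_det]
  exact Matrix.linearIndependent_rows_iff_isUnit (A := Matrix.of P)

/-- rows of `v` in span of rows of `P`. -/
lemma exists_coord {n m : ℕ} (P : Fin n → Fin n → KK) (v : Fin m → Fin n → KK)
    (h : ∀ s, v s ∈ Submodule.span OO (Set.range P)) :
    ∃ C : Matrix (Fin m) (Fin n) OO, Matrix.of v = C.map (algebraMap OO KK) * Matrix.of P := by
  choose c hc using fun s => (mem_span_iff P (v s)).1 (h s)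
  refine ⟨Matrix.of c, ?_⟩
  ext s t
  simp only [Matrix.of_apply, hc s]
  rfl

lemma order_det_le {n : ℕ} (P v : Fin n → Fin n → KK)
    (h : ∀ s, v s ∈ Submodule.span OO (Set.range P)) (hv : (Matrix.of v).det ≠ 0) :
    (Matrix.of P).det.order ≤ (Matrix.of v).det.order := by
  obtain ⟨C, hC⟩ := exists_coord P v h
  have hd : (Matrix.of v).det = algebraMap OO KK C.det * (Matrix.of P).det := by
    rw [hC, Matrix.det_mul, RingHom.map_det]; rfl
  rw [hd] at hv ⊢
  rw [HahnSeries.order_mul (left_ne_zero_of_mul hv) (right_ne_zero_of_mul hv)]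
  have := order_alg_nonneg C.det
  omega

lemma basis_order_eq {n : ℕ} {L : Submodule OO (Fin n → KK)} {P v : Fin n → Fin n → KK}
    (hP : IsLatticeBasis L P) (hv : IsLatticeBasis L v) :
    (Matrix.of P).det.order = (Matrix.of v).det.order := by
  apply le_antisymm
  · apply order_det_le
    · intro s
      rw [← hP.2, hv.2]; exact Submodule.subset_span ⟨s, rfl⟩
    · exact (linInd_iff v).1 hv.1
  · apply order_det_le
    · intro s
      rw [← hv.2, hP.2]; exact Submodule.subset_span ⟨s, rfl⟩
    · exact (linInd_iff P).1 hP.1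

lemma top_sum {n : ℕ} (ν : Fin n → ℤ) (hν : Antitone ν) (c : ℕ) (T : Finset (Fin n))
    (hT : T.card = (Finset.univ.filter (fun s : Fin n => (s : ℕ) < c)).card) :
    ∑ s ∈ T, ν s ≤ dPartial c ν := by
  classical
  unfold dPartial
  set A := Finset.univ.filter (fun s : Fin n => (s : ℕ) < c) with hA
  have hc : (T \ A).card = (A \ T).card := by
    have h1 := Finset.card_sdiff_add_card_inter T A
    have h2 := Finset.card_sdiff_add_card_inter A T
    rw [Finset.inter_comm] at h2
    omega
  have e1 := Finset.sum_inter_add_sum_sdiff T A ν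
  have e2 := Finset.sum_inter_add_sum_sdiff A T ν
  rw [Finset.inter_comm] at e2
  have key : ∑ s ∈ T \ A, ν s ≤ ∑ s ∈ A \ T, ν s := by
    rcases (T \ A).eq_empty_or_nonempty with h | h
    · have : A \ T = ∅ := by rw [← Finset.card_eq_zero, ← hc, h]; rfl
      rw [h, this]
    · obtain ⟨m, hm, hmax⟩ := Finset.exists_max_image (T \ A) ν h
      have h1 := Finset.sum_le_card_nsmul (T \ A) ν (ν m) hmax
      have h2 := Finset.card_nsmul_le_sum (A \ T) ν (ν m) (by
        intro x hx
        apply hν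
        simp [hA] at hx hm
        rw [Fin.le_def]; omega)
      rw [hc] at h1
      exact h1.trans h2
  omega

lemma tpow_sum {ι : Type*} (T : Finset ι) (f : ι → ℤ) :
    ∏ s ∈ T, (tpow (f s) : KK) = tpow (∑ s ∈ T, f s) := by
  classical
  induction T using Finset.induction_on with
  | empty => simp [tpow_zero']
  | insert a T ha ih => rw [Finset.prod_insert ha, Finset.sum_insert ha, ih, tpow_mul]

lemma sum_lab {n : ℕ} {lab : Fin n → Fin 3} {pos : Fin n → Fin n} {c : Fin 3 → ℕ}
    (hpos : ∀ a, Set.BijOn pos {s | lab s = a} {r | (r : ℕ) < c a}) (F : Fin 3 → Fin n → ℤ) :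
    ∑ s, F (lab s) (pos s) = ∑ a, dPartial (c a) (F a) := by
  classical
  rw [← Finset.sum_fiberwise Finset.univ lab]
  refine Finset.sum_congr rfl fun a _ => ?_
  unfold dPartial
  refine Finset.sum_bij (fun s _ => pos s) ?_ ?_ ?_ ?_
  · intro s hs
    simp at hs
    simpa using (hpos a).mapsTo hs
  · intro s hs s' hs' h
    simp at hs hs'
    exact (hpos a).injOn hs hs' h
  · intro r hr
    simp at hr
    obtain ⟨s, hs, hs'⟩ := (hpos a).surjOn hr
    exact ⟨s, by simpa using hs, hs'⟩
  · intro s hs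
    simp at hs
    rw [hs]

lemma sum_lab_le {n : ℕ} {lab : Fin n → Fin 3} {pos : Fin n → Fin n} {c : Fin 3 → ℕ}
    (hpos : ∀ a, Set.BijOn pos {s | lab s = a} {r | (r : ℕ) < c a}) (F : Fin 3 → Fin n → ℤ)
    (hF : ∀ a, Antitone (F a)) (r : Fin n → Fin n)
    (hr : ∀ s s', lab s = lab s' → r s = r s' → s = s') :
    ∑ s, F (lab s) (r s) ≤ ∑ a, dPartial (c a) (F a) := by
  classical
  rw [← Finset.sum_fiberwise Finset.univ lab]
  refine Finset.sum_le_sum fun a _ => ?_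
  have hinj : Set.InjOn r (Finset.univ.filter (fun s => lab s = a) : Finset (Fin n)) := by
    intro s hs s' hs' h
    simp at hs hs'
    exact hr s s' (hs.trans hs'.symm) h
  have h1 : ∑ s with lab s = a, F (lab s) (r s)
      = ∑ t ∈ (Finset.univ.filter (fun s => lab s = a)).image r, F a t := by
    rw [Finset.sum_image hinj]
    refine Finset.sum_congr rfl fun s hs => ?_
    simp at hs
    rw [hs]
  rw [h1]
  refine top_sum _ (hF a) _ _ ?_
  rw [Finset.card_image_of_injOn hinj]
  refine Finset.card_bij (fun s _ => pos s) ?_ ?_ ?_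
  · intro s hs
    simp at hs
    simpa using (hpos a).mapsTo hs
  · intro s hs s' hs' h
    simp at hs hs'
    exact (hpos a).injOn hs hs' h
  · intro r hr
    simp at hr
    obtain ⟨s, hs, hs'⟩ := (hpos a).surjOn hr
    exact ⟨s, by simpa using hs, hs'⟩

lemma LB {n : ℕ} {lab : Fin n → Fin 3} {pos : Fin n → Fin n} {c : Fin 3 → ℕ}
    (hpos : ∀ a, Set.BijOn pos {s | lab s = a} {r | (r : ℕ) < c a})
    (P : Fin n → Fin n → KK) (ν : Fin 3 → Fin n → ℤ)
    (hν : ∀ a, Antitone (ν a)) (g : Fin 3 → Fin n → Fin n → KK)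
    (hg : ∀ a s, (tpow (ν a s) : KK) • g a s ∈ Submodule.span OO (Set.range P))
    (v : Fin n → Fin n → KK) (hv : ∀ s, v s ∈ Submodule.span OO (Set.range (g (lab s))))
    (hd : (Matrix.of v).det ≠ 0) :
    (Matrix.of P).det.order - ∑ a, dPartial (c a) (ν a) ≤ (Matrix.of v).det.order := by
  classical
  set N := ∑ a, dPartial (c a) (ν a) with hN
  choose C hC using fun s => (Submodule.mem_span_range_iff_exists_fun OO).1 (hv s)
  set H : Fin 3 → Fin n → Fin n → KK := fun a s => (tpow (ν a s) : KK) • g a s with hH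
  have hv' : ∀ s, v s = ∑ r, (algebraMap OO KK (C s r) * tpow (-ν (lab s) r)) • H (lab s) r := by
    intro s
    rw [← hC s]
    refine Finset.sum_congr rfl fun r _ => ?_
    rw [hH]
    simp only
    rw [smul_smul, mul_assoc, tpow_mul, neg_add_cancel, tpow_zero', mul_one]
    ext t; simp [Algebra.smul_def]
  have hdet : (Matrix.of v).det = ∑ r : Fin n → Fin n,
      (∏ s, (algebraMap OO KK (C s (r s)) * tpow (-ν (lab s) (r s)))) *
        (Matrix.of (fun s => H (lab s) (r s))).det := by
    have : Matrix.of v = fun s => ∑ r, (algebraMap OO KK (C s r) * tpow (-ν (lab s) r)) • H (lab s) r := by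
      funext s; exact hv' s
    rw [this]
    change (Matrix.detRowAlternating (R := KK) (n := Fin n)).toMultilinearMap _ = _
    rw [MultilinearMap.map_sum]
    refine Finset.sum_congr rfl fun r _ => ?_
    rw [MultilinearMap.map_smul_univ]
    rfl
  have hterm : ∀ r : Fin n → Fin n, ∃ f : OO,
      tpow N * ((∏ s, (algebraMap OO KK (C s (r s)) * tpow (-ν (lab s) (r s)))) *
        (Matrix.of (fun s => H (lab s) (r s))).det) = algebraMap OO KK f * (Matrix.of P).det := by
    intro r
    by_cases hr : ∀ s s', lab s = lab s' → r s = r s' → s = s'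
    · have hle := sum_lab_le hpos ν hν r hr
      obtain ⟨C', hC'⟩ := exists_coord P (fun s => H (lab s) (r s)) (fun s => hg _ _)
      obtain ⟨f, hf⟩ := tpow_nonneg_mem (m := N - ∑ s, ν (lab s) (r s)) (by omega)
      refine ⟨f * (∏ s, C s (r s)) * C'.det, ?_⟩
      have e1 : (C'.map (algebraMap OO KK)).det = algebraMap OO KK C'.det := by
        rw [RingHom.map_det]; rfl
      rw [hC', Matrix.det_mul, e1, Finset.prod_mul_distrib, tpow_sum, map_mul, map_mul, hf, map_prod,
        Finset.sum_neg_distrib, sub_eq_add_neg, ← tpow_mul]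
      ring
    · push Not at hr
      obtain ⟨s, s', h1, h2, h3⟩ := hr
      refine ⟨0, ?_⟩
      rw [Matrix.det_zero_of_row_eq h3 (by ext t; simp [h1, h2])]
      simp
  choose f hf using hterm
  have hfin : tpow N * (Matrix.of v).det = algebraMap OO KK (∑ r, f r) * (Matrix.of P).det := by
    rw [hdet, Finset.mul_sum, map_sum, Finset.sum_mul]
    exact Finset.sum_congr rfl fun r _ => hf r
  have hne : tpow N * (Matrix.of v).det ≠ 0 := mul_ne_zero (tpow_ne _) hd
  have h1 := HahnSeries.order_mul (tpow_ne N) hd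
  rw [hfin] at hne h1
  rw [HahnSeries.order_mul (left_ne_zero_of_mul hne) (right_ne_zero_of_mul hne), order_tpow] at h1
  have := order_alg_nonneg (∑ r, f r)
  omega

lemma rado_aux {n : ℕ} {V : Type*} [AddCommGroup V] [Module ℝ V] [FiniteDimensional ℝ V] (N : ℕ) :
    ∀ (A : Fin n → Submodule ℝ V), ∑ s, Module.finrank ℝ (A s) ≤ N →
    (∀ I : Finset (Fin n), I.card ≤ Module.finrank ℝ (I.sup A : Submodule ℝ V)) →
    ∃ w : Fin n → V, (∀ s, w s ∈ A s) ∧ LinearIndependent ℝ w := by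
  classical
  induction N with
  | zero =>
    intro A hN h
    have hn : n = 0 := by
      by_contra hn
      have h1 := h {⟨0, Nat.pos_of_ne_zero hn⟩}
      have h2 := Finset.single_le_sum (f := fun s => Module.finrank ℝ (A s)) (fun _ _ => Nat.zero_le _)
        (Finset.mem_univ ⟨0, Nat.pos_of_ne_zero hn⟩)
      rw [Finset.card_singleton, Finset.sup_singleton] at h1
      omega
    subst hn
    exact ⟨Fin.elim0, fun s => s.elim0, linearIndependent_empty_type⟩
  | succ N ih =>
    intro A hN h
    by_cases hA : ∀ s, Module.finrank ℝ (A s) ≤ 1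
    · have : ∀ s, ∃ w ∈ A s, A s = Submodule.span ℝ {w} := by
        intro s
        have h1 := h {s}
        rw [Finset.card_singleton, Finset.sup_singleton] at h1
        obtain ⟨⟨w, hw⟩, hw0, hw1⟩ := finrank_eq_one_iff'.1 (le_antisymm (hA s) h1)
        refine ⟨w, hw, le_antisymm ?_ ?_⟩
        · intro x hx
          obtain ⟨c, hc⟩ := hw1 ⟨x, hx⟩
          rw [Submodule.mem_span_singleton]
          exact ⟨c, by simpa using congrArg Subtype.val hc⟩
        · simpa using hw
      choose w hw hw' using this
      refine ⟨w, hw, ?_⟩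
      rw [linearIndependent_iff_card_le_finrank_span]
      have h1 := h Finset.univ
      have h2 : (Finset.univ.sup A : Submodule ℝ V) = Submodule.span ℝ (Set.range w) := by
        rw [Submodule.span_range_eq_iSup, Finset.sup_univ_eq_iSup]
        exact iSup_congr hw'
      rw [h2] at h1
      simpa [Set.finrank] using h1
    · push Not at hA
      obtain ⟨s, hs⟩ := hA
      obtain ⟨x, hx, hx0⟩ : ∃ x ∈ A s, x ≠ 0 := by
        apply Submodule.exists_mem_ne_zero_of_ne_bot
        intro h0
        rw [h0, finrank_bot] at hs
        omega
      obtain ⟨Q, hQ⟩ := Submodule.exists_isCompl (Submodule.span ℝ {x})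
      have hxA : Submodule.span ℝ {x} ≤ A s := by simpa using hx
      set A1 := Submodule.span ℝ {x}
      set A2 := Q ⊓ A s
      have hsup : A1 ⊔ A2 = A s := by
        rw [← sup_inf_assoc_of_le _ hxA, hQ.sup_eq_top, top_inf_eq]
      have hlt1 : A1 < A s := by
        refine lt_of_le_of_ne hxA ?_
        intro he
        rw [← he, finrank_span_singleton hx0] at hs
        omega
      have hlt2 : A2 < A s := by
        refine lt_of_le_of_ne inf_le_right ?_
        intro he
        have : x ∈ A2 := by rw [he]; exact hx
        have hxQ : x ∈ A1 ⊓ Q := ⟨Submodule.mem_span_singleton_self x, this.1⟩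
        rw [hQ.inf_eq_bot] at hxQ
        exact hx0 (by simpa using hxQ)
      have step : ∀ A' : Submodule ℝ V, A' < A s →
          (∃ w : Fin n → V, (∀ s, w s ∈ A s) ∧ LinearIndependent ℝ w) ∨
          ∃ I : Finset (Fin n), s ∉ I ∧ Module.finrank ℝ (A' ⊔ I.sup A : Submodule ℝ V) ≤ I.card := by
        intro A' hA'
        by_cases hc : ∀ I : Finset (Fin n), I.card ≤
            Module.finrank ℝ (I.sup (Function.update A s A') : Submodule ℝ V)
        · left
          obtain ⟨w, hw, hw'⟩ := ih (Function.update A s A') (by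
            have : ∑ t, Module.finrank ℝ (Function.update A s A' t) < ∑ t, Module.finrank ℝ (A t) := by
              apply Finset.sum_lt_sum
              · intro t _
                by_cases ht : t = s
                · subst ht; rw [Function.update_self]; exact Submodule.finrank_mono hA'.le
                · rw [Function.update_of_ne ht]
              · exact ⟨s, Finset.mem_univ _, by rw [Function.update_self]; exact Submodule.finrank_lt_finrank_of_lt hA'⟩
            omega) hc
          refine ⟨w, fun t => ?_, hw'⟩
          by_cases ht : t = s
          · subst ht; have := hw t; simp at this; exact hA'.le this
          · have := hw t; simpa [ht] using this
        · right
          push Not at hc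
          obtain ⟨I, hI⟩ := hc
          have hcongr : ∀ J : Finset (Fin n), s ∉ J → J.sup (Function.update A s A') = J.sup A := by
            intro J hJ
            refine Finset.sup_congr rfl fun t ht => ?_
            rw [Function.update_of_ne]
            rintro rfl; exact hJ ht
          by_cases hsI : s ∈ I
          · refine ⟨I.erase s, by simp, ?_⟩
            rw [← Finset.insert_erase hsI, Finset.sup_insert, hcongr _ (by simp),
              Function.update_self, Finset.card_insert_of_notMem (by simp)] at hI
            omega
          · exfalso
            rw [hcongr _ hsI] at hI
            have := h I
            omega
      rcases step A1 hlt1 with h1 | ⟨I1, hI1, hf1⟩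
      · exact h1
      rcases step A2 hlt2 with h2 | ⟨I2, hI2, hf2⟩
      · exact h2
      exfalso
      have hmod := Submodule.finrank_sup_add_finrank_inf_eq (A1 ⊔ I1.sup A) (A2 ⊔ I2.sup A)
      have e1 : (A1 ⊔ I1.sup A) ⊔ (A2 ⊔ I2.sup A) = (insert s (I1 ∪ I2)).sup A := by
        rw [sup_sup_sup_comm, hsup, Finset.sup_insert, Finset.sup_union]
      have e2 : (I1 ∩ I2).sup A ≤ (A1 ⊔ I1.sup A) ⊓ (A2 ⊔ I2.sup A) := by
        apply le_inf
        · exact (Finset.sup_mono Finset.inter_subset_left).trans le_sup_right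
        · exact (Finset.sup_mono Finset.inter_subset_right).trans le_sup_right
      have e3 := Submodule.finrank_mono e2
      rw [e1] at hmod
      have h3 := h (insert s (I1 ∪ I2))
      rw [Finset.card_insert_of_notMem (by simp [hI1, hI2])] at h3
      have h4 := h (I1 ∩ I2)
      have h5 := Finset.card_union_add_card_inter I1 I2
      omega

lemma adapted {n : ℕ} (S : Submodule ℝ (Fin n → ℝ)) :
    ∃ (B E : Matrix (Fin n) (Fin n) ℝ) (D : Finset (Fin n)), E * B = 1 ∧
      D.card = Module.finrank ℝ S ∧ ∀ w ∈ S, ∀ r ∉ D, (w ᵥ* E) r = 0 := by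
  classical
  obtain ⟨Q, hQ⟩ := Submodule.exists_isCompl S
  let b0 := ((Module.finBasis ℝ S).prod (Module.finBasis ℝ Q)).map (Submodule.prodEquivOfIsCompl S Q hQ)
  have hcard : Fintype.card (Fin (Module.finrank ℝ S) ⊕ Fin (Module.finrank ℝ Q)) = Fintype.card (Fin n) := by
    rw [← Module.finrank_eq_card_basis b0, Module.finrank_fin_fun, Fintype.card_fin]
  let e := Fintype.equivOfCardEq hcard
  let b := b0.reindex e
  refine ⟨Matrix.of (fun r => b r), Matrix.of (fun s r => b.repr (Pi.single s 1) r),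
    Finset.univ.image (fun x => e (Sum.inl x)), ?_, ?_, ?_⟩
  · ext s t
    have := b.sum_repr (Pi.single s 1)
    have := congrFun this t
    simp only [Finset.sum_apply, Pi.smul_apply, smul_eq_mul] at this
    rw [Matrix.mul_apply]
    simp only [Matrix.of_apply]
    rw [this, Matrix.one_apply, Pi.single_apply]
    simp [eq_comm]
  · have := Finset.card_image_of_injective (Finset.univ) (e.injective.comp (Sum.inl_injective (β := Fin (Module.finrank ℝ Q)) (α := Fin (Module.finrank ℝ S))))
    simpa [Function.comp_def] using this
  · intro w hw r hr
    have hE : (w ᵥ* Matrix.of (fun s r => b.repr (Pi.single s 1) r)) r = b.repr w r := by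
      have : w = ∑ s, w s • (Pi.single s 1 : Fin n → ℝ) := by
        ext t; simp [Finset.sum_apply, Pi.single_apply]
      conv_rhs => rw [this]
      simp [Matrix.vecMul, dotProduct, map_sum, Finsupp.finsetSum_apply]
    rw [hE]
    simp only [b, Module.Basis.repr_reindex_apply, b0]
    rcases hx : e.symm r with x | x
    · exfalso; apply hr
      simp only [Finset.mem_image, Finset.mem_univ, true_and]
      exact ⟨x, by rw [← hx]; simp⟩
    · have h1 : (Submodule.prodEquivOfIsCompl S Q hQ).symm w = (⟨w, hw⟩, 0) := by
        rw [LinearEquiv.symm_apply_eq]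
        simp
      simp [h1]

lemma step_lattice {n : ℕ} (P : Fin n → Fin n → KK) (hP : (Matrix.of P).det ≠ 0)
    (S : Submodule ℝ (Fin n → ℝ)) :
    ∃ P' : Fin n → Fin n → KK, (Matrix.of P').det ≠ 0 ∧
      (Matrix.of P').det.order = (Matrix.of P).det.order + n - Module.finrank ℝ S ∧
      (∀ c : Fin n → OO, (fun r => PowerSeries.constantCoeff (c r)) ∈ S →
        (fun r => algebraMap OO KK (c r)) ᵥ* Matrix.of P ∈ Submodule.span OO (Set.range P')) ∧
      (∀ c : Fin n → OO,
        (tpow 1 : KK) • ((fun r => algebraMap OO KK (c r)) ᵥ* Matrix.of P)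
          ∈ Submodule.span OO (Set.range P')) := by
  classical
  obtain ⟨B, E, D, hEB, hD, hES⟩ := adapted S
  let d : Fin n → OO := fun r => if r ∈ D then 1 else PowerSeries.X
  let B' : Matrix (Fin n) (Fin n) OO := B.map (PowerSeries.C (R := ℝ))
  let E' : Matrix (Fin n) (Fin n) OO := E.map (PowerSeries.C (R := ℝ))
  have hEB' : E' * B' = 1 := by
    simp only [E', B']
    rw [← Matrix.map_mul, hEB]
    simp
  let M : Matrix (Fin n) (Fin n) OO := Matrix.diagonal d * B'
  let P' : Matrix (Fin n) (Fin n) KK := M.map (algebraMap OO KK) * Matrix.of P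
  have hB'u : IsUnit B'.det := by
    have := congrArg Matrix.det hEB'
    rw [Matrix.det_mul, Matrix.det_one] at this
    exact IsUnit.of_mul_eq_one_right _ this
  have hdet : P'.det = tpow ((n : ℤ) - Module.finrank ℝ S) * (algebraMap OO KK B'.det * (Matrix.of P).det) := by
    have e1 : (M.map (algebraMap OO KK)).det = algebraMap OO KK M.det := by
      rw [RingHom.map_det]; rfl
    have hle : D.card ≤ n := by simpa using Finset.card_le_univ D
    have e2 : ∏ r, d r = PowerSeries.X ^ (n - D.card) := by
      simp only [d]
      rw [Finset.prod_ite]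
      simp [Finset.filter_not, ← Finset.compl_eq_univ_sdiff, Finset.card_compl]
    have e3 : ((n : ℤ) - Module.finrank ℝ S) = ((n - D.card : ℕ) : ℤ) := by
      rw [← hD]; omega
    simp only [P']
    rw [Matrix.det_mul, e1, e3, tpow_nat, ← e2]
    simp only [M]
    rw [Matrix.det_mul, Matrix.det_diagonal, map_mul, mul_assoc]
  have hBne : algebraMap OO KK B'.det ≠ 0 := by
    rw [Ne, map_eq_zero_iff _ algInj]; exact hB'u.ne_zero
  have hkey : ∀ c' : Fin n → OO, ∀ c : Fin n → OO, (∀ r, c' r * d r = (c ᵥ* E') r) →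
      (fun r => algebraMap OO KK (c r)) ᵥ* Matrix.of P ∈ Submodule.span OO (Set.range P') := by
    intro c' c h
    refine (mem_span_iff P' _).2 ⟨c', ?_⟩
    have h1 : c = c' ᵥ* M := by
      have : c' ᵥ* Matrix.diagonal d = c ᵥ* E' := by
        ext1 r
        rw [Matrix.vecMul_diagonal]; exact h r
      simp only [M]
      rw [← Matrix.vecMul_vecMul, this, Matrix.vecMul_vecMul, hEB', Matrix.vecMul_one]
    have h2 : (fun r => algebraMap OO KK (c r)) = (fun r => algebraMap OO KK (c' r)) ᵥ* M.map (algebraMap OO KK) := by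
      conv_lhs => rw [h1]
      ext1 r
      exact RingHom.map_vecMul (algebraMap OO KK) M c' r
    rw [h2, Matrix.vecMul_vecMul]
    rfl
  refine ⟨P', ?_, ?_, ?_, ?_⟩
  · change P'.det ≠ 0
    rw [hdet]
    exact mul_ne_zero (tpow_ne _) (mul_ne_zero hBne hP)
  · change P'.det.order = _
    rw [hdet, HahnSeries.order_mul (tpow_ne _) (mul_ne_zero hBne hP), HahnSeries.order_mul hBne hP,
      order_tpow, order_alg_unit hB'u]
    ring
  · intro c hc
    have : ∀ r, ∃ x, x * d r = (c ᵥ* E') r := by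
      intro r
      by_cases hr : r ∈ D
      · exact ⟨(c ᵥ* E') r, by simp [d, hr]⟩
      · have h0 : PowerSeries.constantCoeff ((c ᵥ* E') r) = 0 := by
          have := hES _ hc r hr
          rw [RingHom.map_vecMul]
          rw [← this]
          have e : E'.map (PowerSeries.constantCoeff (R := ℝ)) = E := by
            ext a b
            simp [E']
          rw [e]
          rfl
        obtain ⟨x, hx⟩ := PowerSeries.X_dvd_iff.2 h0
        exact ⟨x, by simp only [d, hr, if_false]; rw [hx, mul_comm]⟩
    choose c' hc' using this
    exact hkey c' c hc'
  · intro c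
    have : ∀ r, ∃ x, x * d r = ((fun r => PowerSeries.X * c r) ᵥ* E') r := by
      intro r
      have e : (fun r => PowerSeries.X * c r) = (PowerSeries.X : OO) • c := rfl
      rw [e, Matrix.smul_vecMul]
      by_cases hr : r ∈ D
      · exact ⟨_, by simp only [d, hr, if_true]; rw [mul_one]⟩
      · exact ⟨(c ᵥ* E') r, by simp [d, hr, mul_comm]⟩
    choose c' hc' using this
    have := hkey c' _ hc'
    have e2 : (fun r => algebraMap OO KK (PowerSeries.X * c r)) = (tpow 1 : KK) • (fun r => algebraMap OO KK (c r)) := by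
      ext1 r
      have := tpow_nat 1
      rw [pow_one] at this
      rw [map_mul, ← this]; rfl
    rw [e2, Matrix.smul_vecMul] at this
    exact this

lemma descent {n : ℕ} {lab : Fin n → Fin 3} {pos : Fin n → Fin n} {c : Fin 3 → ℕ}
    (hpos : ∀ a, Set.BijOn pos {s | lab s = a} {r | (r : ℕ) < c a})
    (P : Fin n → Fin n → KK) (hP : (Matrix.of P).det ≠ 0) (ν : Fin 3 → Fin n → ℤ)
    (hν : ∀ a, Antitone (ν a)) (g : Fin 3 → Fin n → Fin n → KK)
    (hg : ∀ a s, (tpow (ν a s) : KK) • g a s ∈ Submodule.span OO (Set.range P)) :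
    (∃ v : Fin n → Fin n → KK, (∀ s, v s ∈ Submodule.span OO (Set.range (g (lab s)))) ∧
      (Matrix.of v).det ≠ 0 ∧
      (Matrix.of v).det.order = (Matrix.of P).det.order - ∑ a, dPartial (c a) (ν a)) ∨
    (∃ (P' : Fin n → Fin n → KK) (ν' : Fin 3 → Fin n → ℤ), (Matrix.of P').det ≠ 0 ∧
      (∀ a, Antitone (ν' a)) ∧
      (∀ a s, (tpow (ν' a s) : KK) • g a s ∈ Submodule.span OO (Set.range P')) ∧
      ∑ a, dPartial (c a) (ν' a) - (Matrix.of P').det.order <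
        ∑ a, dPartial (c a) (ν a) - (Matrix.of P).det.order) := by
  classical
  choose h hh using fun a s => (mem_span_iff P _).1 (hg a s)
  let hb : Fin 3 → Fin n → Fin n → ℝ := fun a s r => PowerSeries.constantCoeff (h a s r)
  let Sub : Fin 3 → Fin n → Submodule ℝ (Fin n → ℝ) := fun a r =>
    Submodule.span ℝ (hb a '' {s | ν a r ≤ ν a s})
  let A : Fin n → Submodule ℝ (Fin n → ℝ) := fun s => Sub (lab s) (pos s)
  by_cases hR : ∀ I : Finset (Fin n), I.card ≤ Module.finrank ℝ (I.sup A : Submodule ℝ (Fin n → ℝ))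
  · left
    obtain ⟨w, hw, hwi⟩ := rado_aux _ A le_rfl hR
    have claim : ∀ a m, ∀ w ∈ Sub a m, ∃ d : Fin n → OO,
        (fun r => PowerSeries.constantCoeff (d r)) = w ∧
        (tpow (-ν a m) : KK) • ((fun r => algebraMap OO KK (d r)) ᵥ* Matrix.of P) ∈
          Submodule.span OO (Set.range (g a)) := by
      intro a m w hw
      induction hw using Submodule.span_induction with
      | mem x hx =>
        obtain ⟨s, hs, rfl⟩ := hx
        refine ⟨h a s, rfl, ?_⟩
        rw [← hh a s, smul_smul, tpow_mul]
        have hgs : g a s ∈ Submodule.span OO (Set.range (g a)) := Submodule.subset_span ⟨s, rfl⟩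
        refine tpow_smul_mem _ hgs ?_
        simp at hs
        omega
      | zero =>
        refine ⟨0, ?_, ?_⟩
        · ext r; simp
        · have : (fun r => algebraMap OO KK ((0 : Fin n → OO) r)) = 0 := by ext1 r; simp
          rw [this, Matrix.zero_vecMul, smul_zero]
          exact Submodule.zero_mem _
      | add x y _ _ hx hy =>
        obtain ⟨d, hd, hd'⟩ := hx
        obtain ⟨e, he, he'⟩ := hy
        refine ⟨d + e, ?_, ?_⟩
        · rw [← hd, ← he]; ext r; simp
        · have : (fun r => algebraMap OO KK ((d + e) r)) =
            (fun r => algebraMap OO KK (d r)) + (fun r => algebraMap OO KK (e r)) := by ext1 r; simp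
          rw [this, Matrix.add_vecMul, smul_add]
          exact Submodule.add_mem _ hd' he'
      | smul x y _ hy =>
        obtain ⟨d, hd, hd'⟩ := hy
        refine ⟨PowerSeries.C x • d, ?_, ?_⟩
        · rw [← hd]; ext r; simp
        · have : (fun r => algebraMap OO KK ((PowerSeries.C x • d) r)) =
            algebraMap OO KK (PowerSeries.C x) • (fun r => algebraMap OO KK (d r)) := by ext1 r; simp
          rw [this, Matrix.smul_vecMul, smul_comm]
          have e : ∀ z : Fin n → KK, algebraMap OO KK (PowerSeries.C x) • z = (PowerSeries.C x : OO) • z := by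
            intro z; ext t; simp [Algebra.smul_def]
          rw [e]
          exact Submodule.smul_mem _ _ hd'
    choose d hd hd' using fun s => claim (lab s) (pos s) (w s) (hw s)
    let v : Fin n → Fin n → KK := fun s =>
      (tpow (-ν (lab s) (pos s)) : KK) • ((fun r => algebraMap OO KK (d s r)) ᵥ* Matrix.of P)
    have hdetv : (Matrix.of v).det = tpow (-∑ s, ν (lab s) (pos s)) *
        (algebraMap OO KK (Matrix.of d).det * (Matrix.of P).det) := by
      have e : Matrix.of v = Matrix.diagonal (fun s => (tpow (-ν (lab s) (pos s)) : KK)) *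
          ((Matrix.of d).map (algebraMap OO KK) * Matrix.of P) := by
        ext s t
        rw [Matrix.diagonal_mul]
        rfl
      rw [e, Matrix.det_mul, Matrix.det_diagonal, Matrix.det_mul, tpow_sum, Finset.sum_neg_distrib,
        RingHom.map_det]
      rfl
    have hu : IsUnit (Matrix.of d).det := by
      rw [PowerSeries.isUnit_iff_constantCoeff, RingHom.map_det]
      have e : (PowerSeries.constantCoeff (R := ℝ)).mapMatrix (Matrix.of d) = Matrix.of w := by
        ext s r
        exact congrFun (hd s) r
      rw [e, ← Matrix.isUnit_iff_isUnit_det]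
      exact Matrix.linearIndependent_rows_iff_isUnit.1 hwi
    have hne : algebraMap OO KK (Matrix.of d).det ≠ 0 := by
      rw [Ne, map_eq_zero_iff _ algInj]; exact hu.ne_zero
    refine ⟨v, hd', ?_, ?_⟩
    · rw [hdetv]
      exact mul_ne_zero (tpow_ne _) (mul_ne_zero hne hP)
    · rw [hdetv, HahnSeries.order_mul (tpow_ne _) (mul_ne_zero hne hP), HahnSeries.order_mul hne hP,
        order_tpow, order_alg_unit hu, sum_lab hpos]
      ring
  · right
    push Not at hR
    obtain ⟨I, hI⟩ := hR
    set S := I.sup A with hS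
    obtain ⟨P', hP', hord, hm1, hm2⟩ := step_lattice P hP S
    let good : Fin 3 → Fin n → Prop := fun a s => ∃ r ∈ I, lab r = a ∧ ν a (pos r) ≤ ν a s
    let ν' : Fin 3 → Fin n → ℤ := fun a s => if good a s then ν a s else ν a s + 1
    refine ⟨P', ν', hP', ?_, ?_, ?_⟩
    · intro a s s' hss
      have h1 := hν a hss
      simp only [ν']
      by_cases hs' : good a s'
      · have hs : good a s := by
          obtain ⟨r, hr, hl, hle⟩ := hs'
          exact ⟨r, hr, hl, hle.trans h1⟩
        rw [if_pos hs, if_pos hs']; exact h1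
      · rw [if_neg hs']
        by_cases hs : good a s
        · rw [if_pos hs]
          obtain ⟨r, hr, hl, hle⟩ := hs
          by_contra hcon
          exact hs' ⟨r, hr, hl, by omega⟩
        · rw [if_neg hs]; omega
    · intro a s
      simp only [ν']
      by_cases hs : good a s
      · rw [if_pos hs, hh a s]
        apply hm1
        obtain ⟨r, hr, rfl, hle⟩ := hs
        have h1 : hb (lab r) s ∈ A r := Submodule.subset_span ⟨s, hle, rfl⟩
        have h2 : A r ≤ S := Finset.le_sup hr
        exact h2 h1
      · rw [if_neg hs, add_comm, ← tpow_mul, ← smul_smul, hh a s]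
        exact hm2 _
    · rw [hord, ← sum_lab hpos, ← sum_lab hpos]
      have : ∑ s, ν' (lab s) (pos s) ≤ ∑ s, ν (lab s) (pos s) + (n - I.card : ℤ) := by
        have h1 : ∑ s, ν' (lab s) (pos s) ≤ ∑ s, (ν (lab s) (pos s) + if s ∈ Iᶜ then 1 else 0) := by
          refine Finset.sum_le_sum fun s _ => ?_
          by_cases hs : s ∈ I
          · have : good (lab s) (pos s) := ⟨s, hs, rfl, le_rfl⟩
            simp [ν', this, hs]
          · simp only [ν', Finset.mem_compl, hs, not_false_eq_true, if_true]
            split_ifs <;> omega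
        refine h1.trans ?_
        rw [Finset.sum_add_distrib, Finset.sum_ite_mem, Finset.univ_inter]
        simp only [Finset.sum_const, Finset.card_compl, Fintype.card_fin]
        have : I.card ≤ n := by simpa using Finset.card_le_univ I
        simp
        omega
      omega

lemma det_ne_of_span {n : ℕ} (P v : Fin n → Fin n → KK) (hP : (Matrix.of P).det ≠ 0)
    (h : ∀ s, P s ∈ Submodule.span OO (Set.range v)) : (Matrix.of v).det ≠ 0 := by
  obtain ⟨C, hC⟩ := exists_coord v P h
  rw [hC, Matrix.det_mul] at hP
  exact right_ne_zero_of_mul hP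

lemma smith {n : ℕ} {p x : Submodule OO (Fin n → KK)} (hp : IsFullLattice p) (hx : IsFullLattice x) :
    ∃ μ, IsDist p x μ := by
  classical
  obtain ⟨P, hP⟩ := hp
  obtain ⟨G, hG⟩ := hx
  have hPd := (linInd_iff P).1 hP.1
  have hGd := (linInd_iff G).1 hG.1
  obtain ⟨N, hN⟩ := exists_clear (fun st : Fin n × Fin n => (Matrix.of G * (Matrix.of P)⁻¹) st.1 st.2)
  choose C hC using fun s t => hN N le_rfl (s, t)
  have hCG : (tpow N : KK) • Matrix.of G = (Matrix.of C).map (algebraMap OO KK) * Matrix.of P := by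
    have : (Matrix.of C).map (algebraMap OO KK) = (tpow N : KK) • (Matrix.of G * (Matrix.of P)⁻¹) := by
      ext s t
      rw [Matrix.map_apply, Matrix.of_apply, ← hC]; rfl
    rw [this, Matrix.smul_mul, Matrix.mul_assoc, Matrix.nonsing_inv_mul _ (isUnit_iff_ne_zero.2 hPd), Matrix.mul_one]
  have hCd : (Matrix.of C).det ≠ 0 := by
    intro h0
    have := congrArg Matrix.det hCG
    have e1 : ((Matrix.of C).map (algebraMap OO KK)).det = algebraMap OO KK (Matrix.of C).det := by
      rw [RingHom.map_det]; rfl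
    rw [Matrix.det_mul, e1, h0, map_zero, zero_mul, Matrix.det_smul] at this
    exact mul_ne_zero (pow_ne_zero _ (tpow_ne _)) hGd this
  have hCli : LinearIndependent OO C := Matrix.linearIndependent_rows_of_det_ne_zero (A := Matrix.of C) hCd
  let Nm : Submodule OO (Fin n → OO) := Submodule.span OO (Set.range C)
  have hrank : Module.finrank OO Nm = Module.finrank OO (Fin n → OO) := by
    rw [finrank_span_eq_card hCli, Module.finrank_fin_fun, Fintype.card_fin]
  obtain ⟨b, a, ab, hab⟩ := Submodule.exists_smith_normal_form_of_rank_eq (Pi.basisFun OO (Fin n)) hrank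
  have ha0 : ∀ s, a s ≠ 0 := by
    intro s h0
    have h1 := hab s
    rw [h0, zero_smul] at h1
    exact ab.ne_zero s (Subtype.ext h1)
  have hau : ∀ s, ∃ (m : ℕ) (u : Units OO), a s = PowerSeries.X ^ m * (u : OO) := by
    intro s
    obtain ⟨m, u, h⟩ := IsDiscreteValuationRing.eq_unit_mul_pow_irreducible (ha0 s) (PowerSeries.X_irreducible (R := ℝ))
    exact ⟨m, u, by rw [h, mul_comm]⟩
  choose m u hmu using hau
  let Φ : (Fin n → OO) →ₗ[OO] (Fin n → KK) := Fintype.linearCombination OO P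
  have hΦ : ∀ c : Fin n → OO, Φ c = (fun r => algebraMap OO KK (c r)) ᵥ* Matrix.of P := by
    intro c
    simp only [Φ, Fintype.linearCombination_apply]
    ext t
    simp [Matrix.vecMul, dotProduct, Finset.sum_apply, Algebra.smul_def]
  let bu := b.unitsSMul u
  let b' : Fin n → Fin n → KK := fun s => Φ (bu s)
  have hspan1 : p = Submodule.span OO (Set.range b') := by
    have e : Set.range b' = Φ '' Set.range bu := by rw [← Set.range_comp]; rfl
    rw [e, ← Submodule.map_span, bu.span_eq, Submodule.map_top]
    simp only [Φ]
    rw [Fintype.range_linearCombination, hP.2]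
  have hspan2 : ∀ s, (tpow N : KK) • G s = Φ (C s) := by
    intro s
    rw [hΦ]
    exact congrFun hCG s
  let τ : (Fin n → KK) →ₗ[OO] (Fin n → KK) :=
    { toFun := fun w => (tpow (-(N : ℤ)) : KK) • w
      map_add' := fun x y => smul_add _ x y
      map_smul' := fun r x => by
        rw [RingHom.id_apply]
        funext t
        simp only [Pi.smul_apply, Algebra.smul_def, smul_eq_mul]
        exact mul_left_comm _ _ _ }
  have hτ : ∀ w, τ w = (tpow (-(N : ℤ)) : KK) • w := fun w => rfl
  have hspan3 : x = Submodule.span OO (Set.range (fun s => (tpow ((m s : ℤ) - N) : KK) • b' s)) := by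
    have e1 : x = Submodule.map (τ ∘ₗ Φ) Nm := by
      simp only [Nm]
      rw [Submodule.map_span, ← Set.range_comp, hG.2]
      congr 2
      funext s
      simp only [Function.comp, LinearMap.comp_apply]
      rw [← hspan2, hτ, smul_smul, tpow_mul, neg_add_cancel, tpow_zero', one_smul]
    have e2 : Nm = Submodule.span OO (Set.range (fun s => (ab s : Fin n → OO))) := by
      have := congrArg (Submodule.map Nm.subtype) ab.span_eq
      rw [Submodule.map_span, ← Set.range_comp, Submodule.map_top, Submodule.range_subtype] at this
      exact this.symm
    rw [e1, e2, Submodule.map_span, ← Set.range_comp]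
    congr 2
    funext s
    simp only [Function.comp, LinearMap.comp_apply, b', bu]
    have e3 : ∀ z : Fin n → KK, (PowerSeries.X ^ m s : OO) • z = (tpow (m s : ℤ) : KK) • z := by
      intro z
      rw [tpow_nat]
      ext t; simp [Algebra.smul_def]
    rw [hab, hmu, mul_smul, map_smul, e3, hτ, smul_smul, tpow_mul, Module.Basis.unitsSMul_apply,
      neg_add_eq_sub]
    rfl
  have hb'd : (Matrix.of b').det ≠ 0 := by
    refine det_ne_of_span P b' hPd fun s => ?_
    rw [← hspan1, hP.2]; exact Submodule.subset_span ⟨s, rfl⟩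
  have hx'd : (Matrix.of (fun s => (tpow ((m s : ℤ) - N) : KK) • b' s)).det ≠ 0 := by
    refine det_ne_of_span G _ hGd fun s => ?_
    rw [← hspan3, hG.2]; exact Submodule.subset_span ⟨s, rfl⟩
  let σ := Tuple.sort m
  refine ⟨fun s => N - m (σ s), ?_, fun s => b' (σ s), ⟨?_, ?_⟩, ?_, ?_⟩
  · intro s s' hss
    have : m (σ s) ≤ m (σ s') := Tuple.monotone_sort m hss
    simp only
    omega
  · exact ((linInd_iff b').2 hb'd).comp σ σ.injective
  · rw [hspan1]
    congr 1
    exact (σ.surjective.range_comp b').symm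
  · have := ((linInd_iff _).2 hx'd).comp σ σ.injective
    convert this using 2 with s
    simp
  · rw [hspan3]
    congr 1
    rw [← σ.surjective.range_comp (fun s => (tpow ((m s : ℤ) - N) : KK) • b' s)]
    congr 1
    funext s
    simp

def lab3 {n : ℕ} (i j : ℕ) (s : Fin n) : Fin 3 :=
  if (s : ℕ) < i then 0 else if (s : ℕ) < i + j then 1 else 2

def pos3 {n : ℕ} (i j : ℕ) (s : Fin n) : Fin n :=
  ⟨if (s : ℕ) < i then s else if (s : ℕ) < i + j then s - i else s - (i + j), by
    have := s.2
    split_ifs <;> omega⟩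

lemma hpos3 {n i j k : ℕ} (h : i + j + k = n) (a : Fin 3) :
    Set.BijOn (pos3 (n := n) i j) {s | lab3 i j s = a} {r | (r : ℕ) < (![i, j, k] : Fin 3 → ℕ) a} := by
  have hl : ∀ s : Fin n, ((s : ℕ) < i ∧ lab3 i j s = 0 ∧ (pos3 i j s : ℕ) = s) ∨
      (i ≤ (s : ℕ) ∧ (s : ℕ) < i + j ∧ lab3 i j s = 1 ∧ (pos3 i j s : ℕ) = s - i) ∨
      (i + j ≤ (s : ℕ) ∧ lab3 i j s = 2 ∧ (pos3 i j s : ℕ) = s - (i + j)) := by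
    intro s
    simp only [lab3, pos3]
    by_cases h1 : (s : ℕ) < i
    · simp [h1]
    · by_cases h2 : (s : ℕ) < i + j
      · simp [h1, h2]; omega
      · simp [h1, h2]; omega
  refine ⟨?_, ?_, ?_⟩
  · intro s hs
    have := s.2
    simp only [Set.mem_ofPred_eq] at hs ⊢
    rcases hl s with ⟨h1, h2, h3⟩ | ⟨h1, h1', h2, h3⟩ | ⟨h1, h2, h3⟩ <;>
    · rw [h2] at hs; subst hs; simp [h3]; omega
  · intro s hs s' hs' he
    simp only [Set.mem_ofPred_eq] at hs hs'
    have he' := congrArg Fin.val he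
    ext
    rcases hl s with ⟨h1, h2, h3⟩ | ⟨h1, h1', h2, h3⟩ | ⟨h1, h2, h3⟩ <;>
    rcases hl s' with ⟨g1, g2, g3⟩ | ⟨g1, g1', g2, g3⟩ | ⟨g1, g2, g3⟩ <;>
    omega
  · intro r hr
    have hr2 := r.2
    simp only [Set.mem_ofPred_eq] at hr
    fin_cases a
    · simp at hr
      refine ⟨r, ?_, ?_⟩
      · simp [lab3, hr]
      · ext; simp [pos3, hr]
    · simp at hr
      refine ⟨⟨r + i, by omega⟩, ?_, ?_⟩
      · simp [lab3]; omega
      · ext; simp [pos3]; omega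
    · simp at hr
      refine ⟨⟨r + (i + j), by omega⟩, ?_, ?_⟩
      · have h1 : ¬ ((r : ℕ) + (i + j) < i) := by omega
        simp [lab3, h1]
      · have h1 : ¬ ((r : ℕ) + (i + j) < i) := by omega
        ext; simp [pos3, h1]

lemma mem_basis {n : ℕ} {L : Submodule OO (Fin n → KK)} {v : Fin n → Fin n → KK}
    (h : IsLatticeBasis L v) (s : Fin n) : v s ∈ L := by
  rw [h.2]; exact Submodule.subset_span ⟨s, rfl⟩

lemma det_scale {n : ℕ} (e : Fin n → ℤ) (v : Fin n → Fin n → KK) :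
    (Matrix.of (fun s => (tpow (e s) : KK) • v s)).det = tpow (∑ s, e s) * (Matrix.of v).det := by
  have : Matrix.of (fun s => (tpow (e s) : KK) • v s)
      = Matrix.diagonal (fun s => (tpow (e s) : KK)) * Matrix.of v := by
    ext s t
    rw [Matrix.diagonal_mul]; rfl
  rw [this, Matrix.det_mul, Matrix.det_diagonal, tpow_sum]

lemma order_det_scale {n : ℕ} (e : Fin n → ℤ) (v : Fin n → Fin n → KK) (hv : (Matrix.of v).det ≠ 0) :
    (Matrix.of (fun s => (tpow (e s) : KK) • v s)).det.order = ∑ s, e s + (Matrix.of v).det.order := by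
  rw [det_scale, HahnSeries.order_mul (tpow_ne _) hv, order_tpow]

lemma mu_le {n i : ℕ} (hi : i ≤ n) {p x : Submodule OO (Fin n → KK)} {μ ν : Fin n → ℤ}
    {g : Fin n → Fin n → KK} (hd : IsDist p x μ) (hg : IsLatticeBasis x g) (hν : Antitone ν)
    (hgp : ∀ s, (tpow (ν s) : KK) • g s ∈ p) : dPartial i μ ≤ dPartial i ν := by
  classical
  obtain ⟨hμ, e, he, hex⟩ := hd
  have hed := (linInd_iff e).1 he.1
  let f : Fin n → ℤ := fun s => if (s : ℕ) < i then -μ s else 0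
  have hf : ∑ s, f s = - dPartial i μ := by
    simp only [f, dPartial]
    rw [← Finset.sum_filter, Finset.sum_neg_distrib]
  have hvd : (Matrix.of (fun s => (tpow (f s) : KK) • e s)).det ≠ 0 := by
    rw [det_scale]; exact mul_ne_zero (tpow_ne _) hed
  have key := LB (hpos3 (n := n) (i := i) (j := n - i) (k := 0) (by omega)) e ![ν, 0, 0]
    (by
      intro a
      fin_cases a
      · exact hν
      · exact antitone_const
      · exact antitone_const) ![g, e, e]
    (by
      intro a s
      rw [← he.2]
      fin_cases a
      · exact hgp s
      · simpa [tpow_zero'] using mem_basis he s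
      · simpa [tpow_zero'] using mem_basis he s)
    (fun s => (tpow (f s) : KK) • e s)
    (by
      intro s
      have hs := s.2
      by_cases h : (s : ℕ) < i
      · have h1 : lab3 i (n - i) s = 0 := by simp [lab3, h]
        have h2 : f s = - μ s := by simp [f, h]
        simp only [h1, h2]
        have := mem_basis hex s
        rw [hg.2] at this
        exact this
      · have h1 : lab3 i (n - i) s = 1 := by
          have : (s : ℕ) < i + (n - i) := by omega
          simp [lab3, h, this]
        have h2 : f s = 0 := by simp [f, h]
        simp only [h1, h2, tpow_zero', one_smul]
        exact Submodule.subset_span ⟨s, rfl⟩)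
    hvd
  rw [order_det_scale _ _ hed, hf, Fin.sum_univ_three] at key
  have h0 : ∀ c, dPartial c (0 : Fin n → ℤ) = 0 := by intro c; simp [dPartial]
  simp [h0] at key
  omega

lemma sum_mu {n : ℕ} {p x : Submodule OO (Fin n → KK)} {μ : Fin n → ℤ} {P : Fin n → Fin n → KK}
    (hd : IsDist p x μ) (hx : HasValDet x 0) (hP : IsLatticeBasis p P) :
    ∑ s, μ s = (Matrix.of P).det.order := by
  obtain ⟨hμ, e, he, hex⟩ := hd
  obtain ⟨g, hg, hg0⟩ := hx
  have h1 := basis_order_eq hex hg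
  rw [order_det_scale _ _ ((linInd_iff e).1 he.1), hg0, Finset.sum_neg_distrib] at h1
  rw [basis_order_eq hP he]
  omega

lemma exists_min {n : ℕ} {lab : Fin n → Fin 3} {pos : Fin n → Fin n} {c : Fin 3 → ℕ}
    (hpos : ∀ a, Set.BijOn pos {s | lab s = a} {r | (r : ℕ) < c a})
    (g : Fin 3 → Fin n → Fin n → KK) (Ft : ℤ)
    (hF : ∀ v : Fin n → Fin n → KK, (∀ s, v s ∈ Submodule.span OO (Set.range (g (lab s)))) →
      (Matrix.of v).det ≠ 0 → -(Matrix.of v).det.order ≤ Ft) :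
    ∃ (P : Fin n → Fin n → KK) (ν : Fin 3 → Fin n → ℤ), (Matrix.of P).det ≠ 0 ∧
      (∀ a, Antitone (ν a)) ∧
      (∀ a s, (tpow (ν a s) : KK) • g a s ∈ Submodule.span OO (Set.range P)) ∧
      ∑ a, dPartial (c a) (ν a) - (Matrix.of P).det.order ≤ Ft := by
  have main : ∀ (M : ℕ) (P : Fin n → Fin n → KK) (ν : Fin 3 → Fin n → ℤ), (Matrix.of P).det ≠ 0 →
      (∀ a, Antitone (ν a)) →
      (∀ a s, (tpow (ν a s) : KK) • g a s ∈ Submodule.span OO (Set.range P)) →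
      ∑ a, dPartial (c a) (ν a) - (Matrix.of P).det.order ≤ Ft + M →
      ∃ (P : Fin n → Fin n → KK) (ν : Fin 3 → Fin n → ℤ), (Matrix.of P).det ≠ 0 ∧
      (∀ a, Antitone (ν a)) ∧
      (∀ a s, (tpow (ν a s) : KK) • g a s ∈ Submodule.span OO (Set.range P)) ∧
      ∑ a, dPartial (c a) (ν a) - (Matrix.of P).det.order ≤ Ft := by
    intro M
    induction M with
    | zero =>
      intro P ν h1 h2 h3 h4
      exact ⟨P, ν, h1, h2, h3, by simpa using h4⟩
    | succ M ih =>
      intro P ν h1 h2 h3 h4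
      rcases descent hpos P h1 ν h2 g h3 with ⟨v, hv, hv0, hvo⟩ | ⟨P', ν', h1', h2', h3', h4'⟩
      · have := hF v hv hv0
        exact ⟨P, ν, h1, h2, h3, by omega⟩
      · exact ih P' ν' h1' h2' h3' (by push_cast at h4; omega)
  obtain ⟨N, hN⟩ := exists_clear (fun x : Fin 3 × Fin n × Fin n => g x.1 x.2.1 x.2.2)
  let P0 : Fin n → Fin n → KK := fun s t => (1 : Matrix (Fin n) (Fin n) KK) s t
  have hP0 : Matrix.of P0 = 1 := rfl
  obtain ⟨ν0, hν0⟩ : ∃ ν0 : Fin 3 → Fin n → ℤ, ∀ a s, ν0 a s = N := ⟨fun _ _ => N, fun _ _ => rfl⟩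
  refine main (∑ a, dPartial (c a) (ν0 a) - (Matrix.of P0).det.order - Ft).toNat
    P0 ν0 ?_ (fun a s s' _ => by rw [hν0, hν0]) ?_ (by omega)
  · rw [hP0]; simp
  · intro a s
    rw [hν0, mem_span_iff, hP0]
    choose f hf using fun t => hN N le_rfl (a, s, t)
    refine ⟨f, ?_⟩
    rw [Matrix.vecMul_one]
    funext t
    rw [← hf t]; rfl

lemma dNorm_sum {n i j k : ℕ} (h : i + j + k = n) (c : Fin 3 → ℕ) (hc : c = ![i, j, k])
    (μ : Fin 3 → Fin n → ℤ) (D : ℤ)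
    (hD : ∀ a, ∑ s, μ a s = D) :
    dNorm i (μ 0) + dNorm j (μ 1) + dNorm k (μ 2) =
      ((∑ a, dPartial (c a) (μ a) - D : ℤ) : ℚ) := by
  unfold dNorm
  rw [hD, hD, hD, Fin.sum_univ_three]
  have e0 : c 0 = i := by rw [hc]; rfl
  have e1 : c 1 = j := by rw [hc]; rfl
  have e2 : c 2 = k := by rw [hc]; rfl
  rw [e0, e1, e2]
  push_cast
  rcases Nat.eq_zero_or_pos n with h0 | h0
  · subst h0
    have hD0 : D = 0 := by rw [← hD 0]; simp
    rw [hD0]; simp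
  · have : (n : ℚ) ≠ 0 := by positivity
    have h' : (i : ℚ) + j + k = n := by exact_mod_cast h
    field_simp
    rw [← h']; ring

end helpers

/-- **Metric interpretation of the tropical invariants.** Let `x₁, x₂, x₃` be points of
the affine Grassmannian for `SL_n` over `ℝ((t))` (lattices with `val (det) = 0`) and
`i + j + k = n`.  Then `fᵗ_{ijk}(x₁,x₂,x₃)`, the maximum of
`-val (det (u₁,...,uᵢ,v₁,...,vⱼ,w₁,...,w_k))` over `u`'s in `x₁`, `v`'s in `x₂`, `w`'s in
`x₃`, equals `min_p (d_i(p,x₁) + d_j(p,x₂) + d_k(p,x₃))`, the minimum over all points `p`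
of the affine Grassmannian of `PGL_n` (lattices, with `d_a` normalized to be
scaling-invariant, so that it only depends on the class of `p` up to scale). -/
theorem ft_eq_min_dist {n i j k : ℕ} (hijk : i + j + k = n)
    (x₁ x₂ x₃ : Submodule (PowerSeries ℝ) (Fin n → LaurentSeries ℝ))
    (h₁ : HasValDet x₁ 0) (h₂ : HasValDet x₂ 0) (h₃ : HasValDet x₃ 0)
    (Ft : ℤ)
    (hFt : IsGreatest {z : ℤ | ∃ v : Fin n → Fin n → LaurentSeries ℝ,
        (∀ s : Fin n,
          v s ∈ (if (s : ℕ) < i then x₁ else if (s : ℕ) < i + j then x₂ else x₃)) ∧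
        (Matrix.of v).det ≠ 0 ∧ z = -(Matrix.of v).det.order} Ft) :
    IsLeast {q : ℚ | ∃ (p : Submodule (PowerSeries ℝ) (Fin n → LaurentSeries ℝ))
        (μ₁ μ₂ μ₃ : Fin n → ℤ), IsFullLattice p ∧
        IsDist p x₁ μ₁ ∧ IsDist p x₂ μ₂ ∧ IsDist p x₃ μ₃ ∧
        q = dNorm i μ₁ + dNorm j μ₂ + dNorm k μ₃} (Ft : ℚ) := by

  classical
  obtain ⟨g₁, hg₁, hg₁0⟩ := h₁
  obtain ⟨g₂, hg₂, hg₂0⟩ := h₂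
  obtain ⟨g₃, hg₃, hg₃0⟩ := h₃
  let x : Fin 3 → Submodule OO (Fin n → KK) := ![x₁, x₂, x₃]
  let g : Fin 3 → Fin n → Fin n → KK := ![g₁, g₂, g₃]
  have hg : ∀ a, IsLatticeBasis (x a) (g a) := by
    intro a; fin_cases a
    · exact hg₁
    · exact hg₂
    · exact hg₃
  have hx0 : ∀ a, HasValDet (x a) 0 := by
    intro a; fin_cases a
    · exact ⟨g₁, hg₁, hg₁0⟩
    · exact ⟨g₂, hg₂, hg₂0⟩
    · exact ⟨g₃, hg₃, hg₃0⟩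
  have hlab : ∀ s : Fin n, (if (s : ℕ) < i then x₁ else if (s : ℕ) < i + j then x₂ else x₃)
      = x (lab3 i j s) := by
    intro s
    simp only [lab3]
    split_ifs <;> rfl
  obtain ⟨c, hcd⟩ : ∃ c : Fin 3 → ℕ, c = ![i, j, k] := ⟨_, rfl⟩
  have hc : ∀ a, c a ≤ n := by
    rw [hcd]
    intro a; fin_cases a <;> simp <;> omega
  have hpos : ∀ a, Set.BijOn (pos3 (n := n) i j) {s | lab3 i j s = a} {r | (r : ℕ) < c a} := by
    rw [hcd]; exact hpos3 hijk
  have lower : ∀ (P : Fin n → Fin n → KK) (p : Submodule OO (Fin n → KK)) (μ : Fin 3 → Fin n → ℤ),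
      IsLatticeBasis p P → (∀ a, IsDist p (x a) (μ a)) →
      Ft ≤ ∑ a, dPartial (c a) (μ a) - (Matrix.of P).det.order := by
    intro P p μ hP hμ
    obtain ⟨v, hv, hv0, hvF⟩ := hFt.1
    choose hanti e he hex using hμ
    have := LB hpos P μ hanti (fun a s => (tpow (-(μ a s)) : KK) • e a s)
      (by
        intro a s
        rw [smul_smul, tpow_mul, add_neg_cancel, tpow_zero', one_smul, ← hP.2]
        exact mem_basis (he a) s) v
      (by
        intro s
        have := hv s
        rw [hlab s, (hex (lab3 i j s)).2] at this
        exact this) hv0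
    omega
  constructor
  · obtain ⟨P, ν, hP, hν, hgν, hle⟩ := exists_min hpos g Ft (by
      intro v hv hv0
      refine hFt.2 ⟨v, fun s => ?_, hv0, rfl⟩
      rw [hlab s, (hg _).2]
      exact hv s)
    let p : Submodule OO (Fin n → KK) := Submodule.span OO (Set.range P)
    have hPp : IsLatticeBasis p P := ⟨(linInd_iff P).2 hP, rfl⟩
    choose μ hμ using fun a => smith (p := p) (x := x a) ⟨P, hPp⟩ ⟨g a, hg a⟩
    refine ⟨p, μ 0, μ 1, μ 2, ⟨P, hPp⟩, hμ 0, hμ 1, hμ 2, ?_⟩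
    rw [dNorm_sum hijk c hcd μ _ (fun a => sum_mu (hμ a) (hx0 a) hPp)]
    have h1 := lower P p μ hPp hμ
    have h2 : ∑ a, dPartial (c a) (μ a) ≤
        ∑ a, dPartial (c a) (ν a) :=
      Finset.sum_le_sum fun a _ => mu_le (hc a) (hμ a) (hg a) (hν a) (hgν a)
    congr 1
    omega
  · rintro q ⟨p, μ₁, μ₂, μ₃, ⟨P, hP⟩, hd₁, hd₂, hd₃, rfl⟩
    let μ : Fin 3 → Fin n → ℤ := ![μ₁, μ₂, μ₃]
    have hμ : ∀ a, IsDist p (x a) (μ a) := by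
      intro a; fin_cases a
      · exact hd₁
      · exact hd₂
      · exact hd₃
    have h1 := lower P p μ hP hμ
    have h2 := dNorm_sum hijk c hcd μ _ (fun a => sum_mu (hμ a) (hx0 a) hP)
    have h3 : dNorm i μ₁ + dNorm j μ₂ + dNorm k μ₃ = dNorm i (μ 0) + dNorm j (μ 1) + dNorm k (μ 2) := rfl
    rw [h3, h2]
    exact_mod_cast h1
end
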